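/- arXiv:2605.08096 — 3 statements merged into one kernel-verified Lean document; each statement's English description precedes it below -/
import Mathlib

section
/- Let 𝔽 be a field of characteristic zero, let k, n_1, …, n_k ≥ 1 be integers, and let Φ : M_{n_1}(𝔽) ⊕ ⋯ ⊕ M_{n_k}(𝔽) → M_{n_1}(𝔽) ⊕ ⋯ ⊕ M_{n_k}(𝔽) be an additive surjection. Then the following are equivalent: (i) Φ maps singular (non-invertible) elements to singular elements; (ii) there exists a permutation π of {1,…,k} with n_{π(i)} = n_i for all i such that Φ maps the i-th block M_{n_i}(𝔽) (embedded with zeros elsewhere) onto the π(i)-th block, and moreover, for each i with n_i ≥ 2 there exist a field endomorphism σ_i : 𝔽 → 𝔽 and invertible matrices P_i, Q_i ∈ M_{n_i}(𝔽) such that the induced map on the i-th block is either A ↦ P_i σ_i(A) Q_i or A ↦ P_i σ_i(Aᵀ) Q_i, where σ_i is applied entrywise. -/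
open Matrix

/-- The block-diagonal matrix algebra `M_{n 0}(𝔽) ⊕ ⋯ ⊕ M_{n (k-1)}(𝔽)`. -/
abbrev BlockAlg (𝔽 : Type*) [Field 𝔽] (k : ℕ) (n : Fin k → ℕ) :=
  ∀ i : Fin k, Matrix (Fin (n i)) (Fin (n i)) 𝔽

/-- The `i`-th block: elements whose components other than the `i`-th vanish. -/
def blockSet {𝔽 : Type*} [Field 𝔽] {k : ℕ} {n : Fin k → ℕ} (i : Fin k) :
    Set (BlockAlg 𝔽 k n) :=
  {a | ∀ j, j ≠ i → a j = 0}

/-- The embedding of `M_{n i}(𝔽)` as the `i`-th block (zeros elsewhere). -/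
def blockEmbed {𝔽 : Type*} [Field 𝔽] {k : ℕ} {n : Fin k → ℕ} (i : Fin k)
    (A : Matrix (Fin (n i)) (Fin (n i)) 𝔽) : BlockAlg 𝔽 k n :=
  Function.update 0 i A

/-!
Adding a generic multiple of a rank-one element `c` to `a` does not decrease the rank of any block
of `Φ a` in characteristic zero, and by surjectivity `c` can be chosen so that the total rank
strictly grows unless `Φ a` is invertible. Hence `Φ (a + b)` is invertible for some `b` whose total
rank is at most the corank of `Φ a`; as `Φ` preserves singularity, `a + b` is invertible too, which
gives `rank (Φ a) ≤ rank a`.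

So `Φ` sends each rank-one element into a single block, and by biadditivity in `(v, w)` of
`Φ (v wᵀ)` that block depends only on the block of the argument; surjectivity turns this dependence
into a permutation. On one block, after normalizing the images of the diagonal matrix units, the
vanishing of the `2 × 2` minors of all `Φ (v wᵀ)` forces each matrix unit to be scaled, up to one
global transposition, and the scaling functions to be one ring homomorphism up to invertible
diagonal factors.
-/

lemma vecMulVec_single_single {R m n : Type*} [MulZeroClass R] [DecidableEq m] [DecidableEq n]
    (i : m) (j : n) (x y : R) :
    vecMulVec (Pi.single i x) (Pi.single j y) = single i j (x * y) := by
  ext r s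
  simp only [vecMulVec_apply, single_apply, Pi.single_apply]
  grind [zero_mul, mul_zero]

lemma addMonoidHom_ext_vecMulVec {R G m n : Type*} [Semiring R] [AddCommMonoid G] [Finite m]
    [Finite n] {f g : Matrix m n R →+ G} (h : ∀ v w, f (vecMulVec v w) = g (vecMulVec v w)) :
    f = g := by
  classical
  have := Fintype.ofFinite m
  have := Fintype.ofFinite n
  refine ext_addMonoidHom fun i j ↦ AddMonoidHom.ext fun x ↦ ?_
  simpa [vecMulVec_single_single] using h (Pi.single i x) (Pi.single j 1)

lemma eq_of_map_apply_ne_zero {V ι : Type*} {G : ι → Type*} [AddZeroClass V]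
    [∀ j, AddZeroClass (G j)] {f : V →+ ∀ j, G j} (hf : ∀ x, {j | f x j ≠ 0}.Subsingleton)
    {x y : V} {j l : ι} (hj : f x j ≠ 0) (hl : f y l ≠ 0) : j = l := by
  by_contra hjl
  have hxl : f x l = 0 := by_contra fun h ↦ hjl (hf x hj h)
  have hyj : f y j = 0 := by_contra fun h ↦ hjl (hf y h hl)
  exact hjl (hf (x + y) (by simpa [hyj]) (by simpa [hxl]))

lemma eq_of_map₂_apply_ne_zero {V W ι : Type*} {G : ι → Type*} [AddZeroClass V] [AddZeroClass W]
    [∀ j, AddCommMonoid (G j)] {f : V →+ W →+ ∀ j, G j}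
    (hf : ∀ v w, {j | f v w j ≠ 0}.Subsingleton) {v v' : V} {w w' : W} {j l : ι}
    (hj : f v w j ≠ 0) (hl : f v' w' l ≠ 0) : j = l := by
  by_contra hjl
  have right {v w w' j l} (hj : f v w j ≠ 0) (hl : f v w' l ≠ 0) : j = l :=
    eq_of_map_apply_ne_zero (hf v) hj hl
  have left {v v' w j l} (hj : f v w j ≠ 0) (hl : f v' w l ≠ 0) : j = l :=
    eq_of_map_apply_ne_zero (f := f.flip w) (hf · w) hj hl
  have hvw'j : f v w' j = 0 := by_contra fun h ↦ hjl (left h hl)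
  have hvw'l : f v w' l = 0 := by_contra fun h ↦ hjl (right hj h)
  have hv'wj : f v' w j = 0 := by_contra fun h ↦ hjl (right h hl)
  have hv'wl : f v' w l = 0 := by_contra fun h ↦ hjl (left hj h)
  have hv'w'j : f v' w' j = 0 := by_contra fun h ↦ hjl (hf v' w' h hl)
  have hvwl : f v w l = 0 := by_contra fun h ↦ hjl (hf v w hj h)
  exact hjl (hf (v + v') (w + w') (by simpa [hvw'j, hv'wj, hv'w'j])
    (by simpa [hvw'l, hv'wl, hvwl]))

section RankPerturbation

open Filter Polynomial

variable {K m n : Type*} [Field K] [Fintype n]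

lemma rank_add_le_rank_add_rank (A B : Matrix m n K) [Finite m] :
    (A + B).rank ≤ A.rank + B.rank := by
  have hrange : LinearMap.range (A + B).mulVecLin ≤
      LinearMap.range A.mulVecLin ⊔ LinearMap.range B.mulVecLin := by
    rw [mulVecLin_add]
    exact LinearMap.range_add_le _ _
  exact (Submodule.finrank_mono hrange).trans (Submodule.finrank_add_le_finrank_add_finrank _ _)

lemma rank_eq_zero_iff_eq_zero [Finite m] {A : Matrix m n K} : A.rank = 0 ↔ A = 0 := by
  classical
  rw [rank, Submodule.finrank_eq_zero, LinearMap.range_eq_bot, ← toLin'_apply',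
    LinearEquiv.map_eq_zero_iff]

lemma rank_lt_rank_add_vecMulVec {A : Matrix m n K} [Fintype m] {u p : m → K} {w v : n → K}
    (hAv : A *ᵥ v = 0) (huA : u ᵥ* A = 0) (hup : u ⬝ᵥ p ≠ 0) (hwv : w ⬝ᵥ v = 1) :
    A.rank < (A + vecMulVec p w).rank := by
  have map_v : (A + vecMulVec p w) *ᵥ v = p := by
    simp [add_mulVec, hAv, vecMulVec_mulVec, hwv]
  have hle : LinearMap.range A.mulVecLin ≤ LinearMap.range (A + vecMulVec p w).mulVecLin := by
    rintro _ ⟨y, rfl⟩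
    refine ⟨y - (w ⬝ᵥ y) • v, ?_⟩
    simp [mulVec_sub, mulVec_smul, hAv, hwv, vecMulVec_mulVec]
  have hp : p ∉ LinearMap.range A.mulVecLin := by
    rintro ⟨y, rfl⟩
    rw [mulVecLin_apply, dotProduct_mulVec, huA, zero_dotProduct] at hup
    exact hup rfl
  exact Submodule.finrank_lt_finrank_of_lt
    (lt_of_le_of_ne hle fun heq ↦ hp (heq ▸ ⟨v, map_v⟩))

lemma isUnit_iff_rank_eq_card [DecidableEq n] {A : Matrix n n K} :
    IsUnit A ↔ A.rank = Fintype.card n := by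
  refine ⟨rank_of_isUnit A, fun h ↦ ?_⟩
  refine mulVec_surjective_iff_isUnit.1 (LinearMap.range_eq_top (f := A.mulVecLin).1 ?_)
  exact Submodule.eq_top_of_finrank_eq (h.trans (Module.finrank_fintype_fun_eq_card K).symm)

lemma exists_isUnit_add [DecidableEq n] (A : Matrix n n K) :
    ∃ E : Matrix n n K, IsUnit (A + E) ∧ A.rank + E.rank = Fintype.card n := by
  classical
  obtain ⟨L, L', d, hA⟩ := Pivot.exists_list_transvec_mul_diagonal_mul_list_transvec A
  set V := (L.map TransvectionStruct.toMatrix).prod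
  set U := (L'.map TransvectionStruct.toMatrix).prod
  have hV : IsUnit V := by simp [isUnit_iff_isUnit_det, V]
  have hU : IsUnit U := by simp [isUnit_iff_isUnit_det, U]
  have hrank (w : n → K) : (V * diagonal w * U).rank = Fintype.card {i // w i ≠ 0} := by
    rw [rank_mul_eq_left_of_isUnit_det _ _ ((isUnit_iff_isUnit_det _).1 hU),
      rank_mul_eq_right_of_isUnit_det _ _ ((isUnit_iff_isUnit_det _).1 hV), rank_diagonal]
  let d' : n → K := fun i ↦ if d i = 0 then 1 else 0
  refine ⟨V * diagonal d' * U, ?_, ?_⟩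
  · rw [hA, ← add_mul, ← mul_add, diagonal_add]
    refine (hV.mul (isUnit_diagonal.2 <| Pi.isUnit_iff.2 fun i ↦ ?_)).mul hU
    by_cases hi : d i = 0 <;> simp [d', hi]
  · have hd' i : d' i ≠ 0 ↔ ¬ d i ≠ 0 := by simp [d']
    rw [hA, hrank, hrank, Fintype.card_congr (Equiv.subtypeEquivRight hd'),
      ← Fintype.card_sum, Fintype.card_congr (Equiv.sumCompl _)]

lemma eventually_eval_natCast_ne_zero {R : Type*} [CommRing R] [IsDomain R] [CharZero R]
    {p : R[X]} (hp : p ≠ 0) : ∀ᶠ t : ℕ in atTop, p.eval (t : R) ≠ 0 := by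
  rw [← Nat.cofinite_eq_atTop, eventually_cofinite]
  simp only [not_not]
  exact (finite_setOfPred_isRoot hp).preimage Nat.cast_injective.injOn

variable [CharZero K]

lemma eventually_isUnit_add_nsmul [DecidableEq n] {A : Matrix n n K} (hA : IsUnit A)
    (Z : Matrix n n K) :
    ∀ᶠ t : ℕ in atTop, IsUnit (A + t • Z) := by
  let p : K[X] := (A.map C + (X : K[X]) • Z.map C).det
  have eval_p (c : K) : p.eval c = (A + c • Z).det := by
    rw [← coe_evalRingHom, RingHom.map_det]
    congr 1
    ext i j
    simp [mul_comm (Z i j)]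
  have hp : p ≠ 0 := by
    intro h
    have hdet : A.det = 0 := by simpa [h] using (eval_p 0).symm
    exact ((isUnit_iff_isUnit_det A).1 hA).ne_zero hdet
  filter_upwards [eventually_eval_natCast_ne_zero hp] with t ht
  rwa [isUnit_iff_isUnit_det, isUnit_iff_ne_zero, ← Nat.cast_smul_eq_nsmul K, ← eval_p]

lemma eventually_rank_le_rank_add_nsmul (A Z : Matrix n n K) :
    ∀ᶠ t : ℕ in atTop, A.rank ≤ (A + t • Z).rank := by
  classical
  obtain ⟨E, hE, hrank⟩ := exists_isUnit_add A
  filter_upwards [eventually_isUnit_add_nsmul hE Z] with t ht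
  have h := rank_add_le_rank_add_rank (A + t • Z) E
  rw [add_right_comm, rank_of_isUnit _ ht] at h
  omega

lemma eventually_rank_lt_rank_add_nsmul {A Z : Matrix n n K} {u v : n → K} (hAv : A *ᵥ v = 0)
    (huA : u ᵥ* A = 0) (huZv : u ⬝ᵥ Z *ᵥ v ≠ 0) :
    ∀ᶠ t : ℕ in atTop, A.rank < (A + t • Z).rank := by
  classical
  obtain ⟨w, hwv⟩ : ∃ w : n → K, w ⬝ᵥ v = 1 := by
    have hv : v ≠ 0 := by
      intro hv
      rw [hv, mulVec_zero, dotProduct_zero] at huZv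
      exact huZv rfl
    obtain ⟨i, hi⟩ := Function.ne_iff.1 hv
    exact ⟨Pi.single i (v i)⁻¹, (single_dotProduct v _ i).trans (inv_mul_cancel₀ hi)⟩
  filter_upwards [eventually_rank_le_rank_add_nsmul (A + vecMulVec (Z *ᵥ v) w) Z,
    eventually_ne_atTop 0] with t hrank ht
  -- As `A v = 0`, right multiplication by `1 + t⁻¹ v wᵀ` adds exactly `(Z v) wᵀ`.
  have hfactor : (A + t • Z) * (1 + (t : K)⁻¹ • vecMulVec v w) =
      A + vecMulVec (Z *ᵥ v) w + t • Z := by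
    have ht' : (t : K) ≠ 0 := Nat.cast_ne_zero.2 ht
    rw [← Nat.cast_smul_eq_nsmul K, add_mul, mul_add, mul_add, mul_one, mul_one, mul_smul_comm,
      mul_smul_comm, mul_vecMulVec, smul_mul_assoc, mul_vecMulVec, hAv, zero_vecMulVec, smul_zero,
      add_zero, inv_smul_smul₀ ht', add_assoc, add_comm (_ • Z)]
  calc A.rank < (A + vecMulVec (Z *ᵥ v) w).rank := rank_lt_rank_add_vecMulVec hAv huA huZv hwv
    _ ≤ (A + vecMulVec (Z *ᵥ v) w + t • Z).rank := hrank
    _ ≤ (A + t • Z).rank := hfactor ▸ rank_mul_le_left _ _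

end RankPerturbation

section RankOne

variable {K m n : Type*} [Field K] [Fintype n] {A : Matrix m n K}

lemma exists_eq_vecMulVec_of_rank_le_one (hA : A.rank ≤ 1) : ∃ p q, A = vecMulVec p q := by
  classical
  obtain ⟨⟨p, hp⟩, h⟩ := finrank_le_one_iff.1 hA
  choose q hq using fun j ↦ h ⟨A.col j, Pi.single j 1, by simp⟩
  refine ⟨p, q, ext fun i j ↦ ?_⟩
  simpa [vecMulVec_apply, mul_comm] using (congr_fun (congrArg Subtype.val (hq j)) i).symm

lemma mul_eq_mul_of_rank_le_one (hA : A.rank ≤ 1) (i j : m) (k l : n) :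
    A i k * A j l = A i l * A j k := by
  obtain ⟨p, q, rfl⟩ := exists_eq_vecMulVec_of_rank_le_one hA
  simp only [vecMulVec_apply]
  ring

lemma apply_eq_zero_of_rank_add_single_le_one [DecidableEq m] [DecidableEq n] {a i : m} {b j : n}
    {c : K} (hc : c ≠ 0) (hA : A.rank ≤ 1) (hAc : (A + single a b c).rank ≤ 1) (hi : i ≠ a)
    (hj : j ≠ b) : A i j = 0 := by
  have minor := mul_eq_mul_of_rank_le_one hA i a j b
  have minor' := mul_eq_mul_of_rank_le_one hAc i a j b
  simp only [Matrix.add_apply, single_apply, hi.symm, hj.symm, and_self, and_false, false_and,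
    if_true, if_false, add_zero, mul_add, minor] at minor'
  exact (mul_eq_zero.1 (add_eq_left.1 minor')).resolve_right hc

end RankOne

section Standard

variable {F K m : Type*} [Field F] [Field K] [Fintype m] [DecidableEq m]

/-- Maps of the form `A ↦ P * σ(A) * Q` or `A ↦ P * σ(Aᵀ) * Q`, with `P` and `Q` invertible and `σ`
a ring homomorphism applied entrywise: the maps in part (ii) of the theorem, for a single block. -/
def IsStandard (Ψ : Matrix m m F → Matrix m m K) : Prop :=
  ∃ (σ : F →+* K) (P Q : Matrix m m K), IsUnit P ∧ IsUnit Q ∧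
    ((∀ A, Ψ A = P * A.map σ * Q) ∨ ∀ A, Ψ A = P * Aᵀ.map σ * Q)

namespace IsStandard

variable {Ψ : Matrix m m F → Matrix m m K}

lemma of_comp_transpose (h : IsStandard fun A ↦ Ψ Aᵀ) : IsStandard Ψ := by
  obtain ⟨σ, P, Q, hP, hQ, h⟩ := h
  exact ⟨σ, P, Q, hP, hQ, h.symm.imp (fun h A ↦ by simpa using h Aᵀ) fun h A ↦ by simpa using h Aᵀ⟩

lemma mul_mul (h : IsStandard Ψ) {U V : Matrix m m K} (hU : IsUnit U) (hV : IsUnit V) :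
    IsStandard fun A ↦ U * Ψ A * V := by
  obtain ⟨σ, P, Q, hP, hQ, h⟩ := h
  exact ⟨σ, U * P, Q * V, hU.mul hP, hQ.mul hV,
    h.imp (fun h A ↦ by simp only [h, mul_assoc]) fun h A ↦ by simp only [h, mul_assoc]⟩

lemma comp_mul_left (h : IsStandard Ψ) {U : Matrix m m F} (hU : IsUnit U) :
    IsStandard fun A ↦ Ψ (U * A) := by
  obtain ⟨σ, P, Q, hP, hQ, h⟩ := h
  have hUσ : IsUnit (U.map σ) := hU.map σ.mapMatrix
  rcases h with h | h
  · exact ⟨σ, P * U.map σ, Q, hP.mul hUσ, hQ, .inl fun A ↦ by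
      simp only [h, Matrix.map_mul, mul_assoc]⟩
  · exact ⟨σ, P, (U.map σ)ᵀ * Q, hP, ((isUnit_transpose _).2 hUσ).mul hQ, .inr fun A ↦ by
      simp only [h, transpose_mul, Matrix.map_mul, transpose_map, mul_assoc]⟩

lemma isUnit_iff (h : IsStandard Ψ) {A : Matrix m m F} : IsUnit (Ψ A) ↔ IsUnit A := by
  obtain ⟨σ, P, Q, hP, hQ, h⟩ := h
  have hdet (B : Matrix m m F) : (B.map σ).det = σ B.det := (σ.map_det B).symm
  simp only [isUnit_iff_isUnit_det, isUnit_iff_ne_zero] at hP hQ ⊢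
  rcases h with h | h <;> simp [h, hdet, hP, hQ]

end IsStandard

lemma isStandard_reindex_iff {m' : Type*} {Ψ : Matrix m m F → Matrix m' m' K} (e : m' ≃ m) :
    IsStandard (fun A ↦ reindex e e (Ψ A)) ↔
      ∃ (σ : F →+* K) (P Q : Matrix m m K), IsUnit P ∧ IsUnit Q ∧
        ((∀ A, Ψ A = reindex e.symm e.symm (P * A.map σ * Q)) ∨
          ∀ A, Ψ A = reindex e.symm e.symm (P * Aᵀ.map σ * Q)) := by
  simp only [IsStandard, ← reindex_symm, Equiv.eq_symm_apply]

lemma exists_ringHom_of_mul {m n : Type*} [Nontrivial m] [Nontrivial n]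
    {R S : Type*} [Semiring R] [Semiring S]
    {t : m → n → R →+ S} (hone : ∀ i j, t i j 1 = 1)
    (hmul : ∀ i j k l, i ≠ j → k ≠ l → ∀ x y, t i k (x * y) = t i l x * t j k y) :
    ∃ σ : R →+* S, ∀ i j x, t i j x = σ x := by
  have col (i k l x) : t i k x = t i l x := by
    rcases eq_or_ne k l with rfl | hkl
    · rfl
    obtain ⟨j, hj⟩ := exists_ne i
    simpa [hone] using hmul i j k l hj.symm hkl x 1
  have row (i j k x) : t i k x = t j k x := by
    rcases eq_or_ne i j with rfl | hij
    · rfl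
    obtain ⟨l, hl⟩ := exists_ne k
    simpa [hone] using hmul i j k l hij hl.symm 1 x
  obtain ⟨i, j, hij⟩ := exists_pair_ne m
  obtain ⟨k, l, hkl⟩ := exists_pair_ne n
  have mul x y : t i k (x * y) = t i k x * t i k y := by
    rw [hmul i j k l hij hkl, col i l k, row j i k]
  exact ⟨{ t i k with map_one' := hone i k, map_mul' := mul }, fun a b x ↦
    (row a i b x).trans (col i b k x)⟩

/-- Additive maps sending matrices of rank at most one, written as `v wᵀ`, to matrices of rank at
most one; the notion through which the shape of the map on one block is determined. -/
def RankOneNonincreasing {F K m n m' n' : Type*} [Field F] [Field K] [Fintype n']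
    (Ψ : Matrix m n F →+ Matrix m' n' K) : Prop :=
  ∀ v w, (Ψ (vecMulVec v w)).rank ≤ 1

namespace RankOneNonincreasing

variable {F K m : Type*} [Field F] [Field K] [Fintype m] {Ψ : Matrix m m F →+ Matrix m m K}

lemma comp_transpose (hΨ : RankOneNonincreasing Ψ) :
    RankOneNonincreasing (Ψ.comp (transposeAddEquiv m m F).toAddMonoidHom) := fun v w ↦ by
  simpa [transpose_vecMulVec] using hΨ w v

lemma mul_mul (hΨ : RankOneNonincreasing Ψ) (U V : Matrix m m K) :
    RankOneNonincreasing
      ((AddMonoidHom.mulRight V).comp ((AddMonoidHom.mulLeft U).comp Ψ)) := fun v w ↦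
  (rank_mul_le_left _ _).trans <| (rank_mul_le_right _ _).trans (hΨ v w)

lemma comp_mulLeft (hΨ : RankOneNonincreasing Ψ) (U : Matrix m m F) :
    RankOneNonincreasing (Ψ.comp (AddMonoidHom.mulLeft U)) := fun v w ↦ by
  simpa [mul_vecMulVec] using hΨ (U *ᵥ v) w

variable [DecidableEq m]

lemma rank_single_le (hΨ : RankOneNonincreasing Ψ) (i j : m) (x : F) :
    (Ψ (single i j x)).rank ≤ 1 := by
  simpa [vecMulVec_single_single] using hΨ (Pi.single i x) (Pi.single j 1)

lemma rank_single_add_single_row_le (hΨ : RankOneNonincreasing Ψ) (i j l : m) (x y : F) :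
    (Ψ (single i j x) + Ψ (single i l y)).rank ≤ 1 := by
  have h := hΨ (Pi.single i 1) (Pi.single j x + Pi.single l y)
  rwa [vecMulVec_add, map_add, vecMulVec_single_single, vecMulVec_single_single, one_mul,
    one_mul] at h

lemma rank_single_add_single_col_le (hΨ : RankOneNonincreasing Ψ) (i j l : m) (x y : F) :
    (Ψ (single i j x) + Ψ (single l j y)).rank ≤ 1 := by
  have h := hΨ (Pi.single i x + Pi.single l y) (Pi.single j 1)
  rwa [add_vecMulVec, map_add, vecMulVec_single_single, vecMulVec_single_single, mul_one,
    mul_one] at h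

lemma exists_map_single_eq (hΨ : RankOneNonincreasing Ψ) (hone : IsUnit (Ψ 1)) :
    ∃ P Q, IsUnit P ∧ IsUnit Q ∧ ∀ i, Ψ (single i i 1) = P * single i i 1 * Q := by
  choose p q hpq using fun i ↦ exists_eq_vecMulVec_of_rank_le_one (hΨ.rank_single_le i i 1)
  let P : Matrix m m K := (of p)ᵀ
  let Q : Matrix m m K := of q
  have hPQ i : Ψ (single i i 1) = P * single i i 1 * Q := by
    rw [hpq, single_eq_single_vecMulVec_single, mul_vecMulVec, vecMulVec_mul, mulVec_single_one,
      single_one_vecMul]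
    rfl
  have hone_eq : Ψ 1 = P * Q := by
    rw [← sum_single_one, map_sum, ← mul_one P, ← sum_single_one, Finset.mul_sum, Finset.sum_mul]
    exact Finset.sum_congr rfl fun i _ ↦ hPQ i
  rw [hone_eq] at hone
  exact ⟨P, Q, isUnit_of_mul_isUnit_left hone, isUnit_of_mul_isUnit_right hone, hPQ⟩

lemma map_single_apply_eq_zero (hΨ : RankOneNonincreasing Ψ)
    (hdiag : ∀ i, Ψ (single i i 1) = single i i 1) {i j a b : m} (hij : i ≠ j)
    (hab : ¬ (a = i ∧ b = j)) (hba : ¬ (a = j ∧ b = i)) (x : F) : Ψ (single i j x) a b = 0 := by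
  have hi := hdiag i ▸ hΨ.rank_single_add_single_row_le i j i x 1
  have hj := hdiag j ▸ hΨ.rank_single_add_single_col_le i j j x 1
  have hx := hΨ.rank_single_le i j x
  by_cases ha : a = i ∨ b = i
  · exact apply_eq_zero_of_rank_add_single_le_one one_ne_zero hx hj (by grind) (by grind)
  · exact apply_eq_zero_of_rank_add_single_le_one one_ne_zero hx hi (by grind) (by grind)

lemma map_single_apply_mul_map_single_apply_swap (hΨ : RankOneNonincreasing Ψ)
    (hdiag : ∀ i, Ψ (single i i 1) = single i i 1) {i j : m} (hij : i ≠ j) (x : F) :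
    Ψ (single i j x) i j * Ψ (single i j x) j i = 0 := by
  rw [mul_eq_mul_of_rank_le_one (hΨ.rank_single_le i j x),
    hΨ.map_single_apply_eq_zero hdiag hij (by grind) (by grind), zero_mul]

lemma add_apply_mul_add_apply_swap (hΨ : RankOneNonincreasing Ψ)
    (hdiag : ∀ i, Ψ (single i i 1) = single i i 1) {i j : m} (hij : i ≠ j) :
    (Ψ (single i j 1) i j + Ψ (single j i 1) i j) *
      (Ψ (single i j 1) j i + Ψ (single j i 1) j i) = 1 := by
  let v : m → F := Pi.single i 1 + Pi.single j 1
  have hv : Ψ (vecMulVec v v) =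
      single i i 1 + Ψ (single i j 1) + (Ψ (single j i 1) + single j j 1) := by
    simp only [v, vecMulVec_add, add_vecMulVec, vecMulVec_single_single, mul_one, map_add, hdiag]
    abel
  have minor := mul_eq_mul_of_rank_le_one (hΨ v v) i j j i
  have hz {a b c x} (hab : a ≠ b) : Ψ (single a b x) c c = 0 :=
    hΨ.map_single_apply_eq_zero hdiag hab (by grind) (by grind) x
  simpa [hv, hz hij, hz hij.symm, hij, hij.symm] using minor

lemma map_single_apply_ne_zero_or (hΨ : RankOneNonincreasing Ψ)
    (hdiag : ∀ i, Ψ (single i i 1) = single i i 1) {i j : m} (hij : i ≠ j) :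
    (Ψ (single i j 1) i j ≠ 0 ∧ Ψ (single j i 1) j i ≠ 0) ∨
      (Ψ (single i j 1) j i ≠ 0 ∧ Ψ (single j i 1) i j ≠ 0) := by
  have h := hΨ.add_apply_mul_add_apply_swap hdiag hij
  have hz := mul_eq_zero.1 (hΨ.map_single_apply_mul_map_single_apply_swap hdiag hij 1)
  have hz' := mul_eq_zero.1 (hΨ.map_single_apply_mul_map_single_apply_swap hdiag hij.symm 1)
  grind

lemma map_single_eq_single (hΨ : RankOneNonincreasing Ψ)
    (hdiag : ∀ i, Ψ (single i i 1) = single i i 1) {i j : m} (h : Ψ (single i j 1) i j ≠ 0) :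
    Ψ (single i j 1) = single i j (Ψ (single i j 1) i j) := by
  rcases eq_or_ne i j with rfl | hij
  · simp [hdiag]
  have hz := mul_eq_zero.1 (hΨ.map_single_apply_mul_map_single_apply_swap hdiag hij 1)
  ext a b
  by_cases hab : a = i ∧ b = j
  · simp [hab]
  · have hab' : single i j (Ψ (single i j 1) i j) a b = 0 := single_apply_of_ne _ _ _ _ _ (by grind)
    rw [hab']
    by_cases hba : a = j ∧ b = i
    · rw [hba.1, hba.2]
      exact hz.resolve_left h
    · exact hΨ.map_single_apply_eq_zero hdiag hij hab hba 1

lemma map_single_apply_ne_zero_of_row (hΨ : RankOneNonincreasing Ψ)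
    (hdiag : ∀ i, Ψ (single i i 1) = single i i 1) {i j l : m} (hij : i ≠ j)
    (h : Ψ (single i j 1) i j ≠ 0) : Ψ (single i l 1) i l ≠ 0 := by
  rcases eq_or_ne l i with rfl | hil
  · simp [hdiag]
  have hli : Ψ (single i l 1) l i = 0 :=
    apply_eq_zero_of_rank_add_single_le_one h (hΨ.rank_single_le i l 1)
      (hΨ.map_single_eq_single hdiag h ▸ hΨ.rank_single_add_single_row_le i l j 1 1) hil hij
  exact ((hΨ.map_single_apply_ne_zero_or hdiag hil.symm).resolve_right fun h' ↦ h'.1 hli).1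

lemma forall_map_single_apply_ne_zero_or (hΨ : RankOneNonincreasing Ψ)
    (hdiag : ∀ i, Ψ (single i i 1) = single i i 1) :
    (∀ i j, Ψ (single i j 1) i j ≠ 0) ∨ ∀ i j, Ψ (single i j 1) j i ≠ 0 := by
  have swap {i j} (h : Ψ (single i j 1) i j ≠ 0) : Ψ (single j i 1) j i ≠ 0 := by
    rcases eq_or_ne i j with rfl | hij
    · exact h
    have hz := mul_eq_zero.1 (hΨ.map_single_apply_mul_map_single_apply_swap hdiag hij 1)
    exact ((hΨ.map_single_apply_ne_zero_or hdiag hij).resolve_right fun h' ↦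
      h'.1 (hz.resolve_left h)).2
  by_cases! h : ∃ i j, i ≠ j ∧ Ψ (single i j 1) i j ≠ 0
  · obtain ⟨i, j, hij, h⟩ := h
    have row {a} : Ψ (single i a 1) i a ≠ 0 := hΨ.map_single_apply_ne_zero_of_row hdiag hij h
    refine .inl fun a b ↦ ?_
    rcases eq_or_ne a i with rfl | hai
    · exact row
    · exact hΨ.map_single_apply_ne_zero_of_row hdiag hai (swap row)
  · refine .inr fun i j ↦ ?_
    rcases eq_or_ne i j with rfl | hij
    · simp [hdiag]
    · exact ((hΨ.map_single_apply_ne_zero_or hdiag hij).resolve_left fun h' ↦ h'.1 (h i j hij)).1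

lemma map_single_apply_of_ne [Nontrivial m] (hΨ : RankOneNonincreasing Ψ)
    (hdiag : ∀ i, Ψ (single i i 1) = single i i 1) (hne : ∀ i j, Ψ (single i j 1) i j ≠ 0)
    {i j a b : m} (hab : ¬ (a = i ∧ b = j)) (x : F) : Ψ (single i j x) a b = 0 := by
  have hx := hΨ.rank_single_le i j x
  by_cases ha : a = i
  · obtain ⟨l, hl⟩ := exists_ne a
    exact apply_eq_zero_of_rank_add_single_le_one (hne l j) hx
      (hΨ.map_single_eq_single hdiag (hne l j) ▸ hΨ.rank_single_add_single_col_le i j l x 1)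
      hl.symm fun hb ↦ hab ⟨ha, hb⟩
  · obtain ⟨l, hl⟩ := exists_ne b
    exact apply_eq_zero_of_rank_add_single_le_one (hne i l) hx
      (hΨ.map_single_eq_single hdiag (hne i l) ▸ hΨ.rank_single_add_single_row_le i j l x 1)
      ha hl.symm

lemma map_apply_eq [Nontrivial m] (hΨ : RankOneNonincreasing Ψ)
    (hdiag : ∀ i, Ψ (single i i 1) = single i i 1) (hne : ∀ i j, Ψ (single i j 1) i j ≠ 0)
    (A : Matrix m m F) (i j : m) : Ψ A i j = Ψ (single i j (A i j)) i j := by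
  have h0 {a b} (hab : ¬ (i = a ∧ j = b)) : Ψ (single a b (A a b)) i j = 0 :=
    hΨ.map_single_apply_of_ne hdiag hne hab _
  conv_lhs => rw [matrix_eq_sum_single A]
  simp only [map_sum, Matrix.sum_apply]
  rw [Finset.sum_eq_single i, Finset.sum_eq_single j]
  · exact fun b _ hb ↦ h0 (by grind)
  · simp
  · exact fun a _ ha ↦ Finset.sum_eq_zero fun b _ ↦ h0 (by grind)
  · simp

lemma isStandard_of_forall_apply_ne_zero [Nontrivial m] (hΨ : RankOneNonincreasing Ψ)
    (hdiag : ∀ i, Ψ (single i i 1) = single i i 1) (hne : ∀ i j, Ψ (single i j 1) i j ≠ 0) :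
    IsStandard Ψ := by
  let s (i j : m) (x : F) : K := Ψ (single i j x) i j
  have minor (v w : m → F) (i j k l) :
      s i k (v i * w k) * s j l (v j * w l) = s i l (v i * w l) * s j k (v j * w k) := by
    have entry (a b) : Ψ (vecMulVec v w) a b = s a b (v a * w b) :=
      hΨ.map_apply_eq hdiag hne _ a b
    simpa only [entry] using mul_eq_mul_of_rank_le_one (hΨ v w) i j k l
  have minor_one (i j k l) : s i k 1 * s j l 1 = s i l 1 * s j k 1 := by
    simpa only [Pi.one_apply, mul_one] using minor 1 1 i j k l
  let t (i j : m) : F →+ K :=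
    AddMonoidHom.mk' (fun x ↦ s i j x / s i j 1) fun x y ↦ by
      simp [s, single_add, add_div]
  obtain ⟨σ, hσ⟩ : ∃ σ : F →+* K, ∀ i j x, t i j x = σ x := by
    refine exists_ringHom_of_mul (fun i j ↦ div_self (hne i j)) fun i j k l hij hkl x y ↦ ?_
    have h := minor (Function.update 1 i x) (Function.update 1 k y) i j k l
    simp only [Function.update_self, Function.update_of_ne hij.symm, Function.update_of_ne hkl.symm,
      Pi.one_apply, mul_one, one_mul] at h
    change s i k (x * y) / s i k 1 = s i l x / s i l 1 * (s j k y / s j k 1)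
    rw [div_mul_div_comm, ← minor_one, ← h, mul_div_mul_right _ _ (hne j l)]
  obtain ⟨o⟩ : Nonempty m := inferInstance
  have hoo : s o o 1 = 1 := by simp [s, hdiag]
  have isUnit_diagonal_of_ne {p : m → K} (hp : ∀ i, p i ≠ 0) : IsUnit (diagonal p) :=
    isUnit_diagonal.2 (Pi.isUnit_iff.2 fun i ↦ (hp i).isUnit)
  refine ⟨σ, diagonal fun i ↦ s i o 1, diagonal fun j ↦ s o j 1,
    isUnit_diagonal_of_ne fun i ↦ hne i o, isUnit_diagonal_of_ne fun j ↦ hne o j, .inl fun A ↦ ?_⟩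
  ext i j
  have hs : s i j (A i j) = s i j 1 * σ (A i j) := by
    rw [← hσ i j]
    exact (mul_div_cancel₀ _ (hne i j)).symm
  rw [hΨ.map_apply_eq hdiag hne, mul_diagonal, diagonal_mul, map_apply, mul_right_comm,
    minor_one i o o j, hoo, mul_one]
  exact hs

lemma isStandard_of_map_single_eq [Nontrivial m] (hΨ : RankOneNonincreasing Ψ)
    (hdiag : ∀ i, Ψ (single i i 1) = single i i 1) : IsStandard Ψ := by
  rcases hΨ.forall_map_single_apply_ne_zero_or hdiag with h | h
  · exact hΨ.isStandard_of_forall_apply_ne_zero hdiag h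
  · refine .of_comp_transpose <| hΨ.comp_transpose.isStandard_of_forall_apply_ne_zero ?_ ?_
    · simpa using hdiag
    · simpa using fun i j ↦ h j i

lemma isStandard_of_isUnit_map_one [Nontrivial m] (hΨ : RankOneNonincreasing Ψ)
    (hone : IsUnit (Ψ 1)) : IsStandard Ψ := by
  obtain ⟨P, Q, hP, hQ, hPQ⟩ := hΨ.exists_map_single_eq hone
  lift P to (Matrix m m K)ˣ using hP
  lift Q to (Matrix m m K)ˣ using hQ
  have h := (hΨ.mul_mul ↑P⁻¹ ↑Q⁻¹).isStandard_of_map_single_eq fun i ↦ by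
    simp [hPQ, mul_assoc, -coe_units_inv]
  simpa [mul_assoc, -coe_units_inv] using h.mul_mul P.isUnit Q.isUnit

theorem isStandard [Nontrivial m] (hΨ : RankOneNonincreasing Ψ) {A : Matrix m m F}
    (hA : IsUnit A) (hΨA : IsUnit (Ψ A)) : IsStandard Ψ := by
  lift A to (Matrix m m F)ˣ using hA
  have h := (hΨ.comp_mulLeft A).isStandard_of_isUnit_map_one (by simpa using hΨA)
  simpa [-coe_units_inv] using h.comp_mul_left A⁻¹.isUnit

end RankOneNonincreasing

end Standard

namespace BlockAlg

open Filter

variable {F K : Type*} [Field F] [Field K] {k : ℕ} {n n' : Fin k → ℕ}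

/-- The rank of an element of the block algebra, as a block-diagonal matrix; it measures how far
the element is from being invertible. -/
noncomputable def blockRank (a : BlockAlg K k n) : ℕ := ∑ i, (a i).rank

lemma blockRank_add_le (a b : BlockAlg K k n) :
    blockRank (a + b) ≤ blockRank a + blockRank b := by
  simp only [blockRank, ← Finset.sum_add_distrib]
  exact Finset.sum_le_sum fun i _ ↦ rank_add_le_rank_add_rank _ _

lemma blockRank_le (a : BlockAlg K k n) : blockRank a ≤ ∑ i, n i :=
  Finset.sum_le_sum fun i _ ↦ (a i).rank_le_width

lemma isUnit_iff_blockRank_eq {a : BlockAlg K k n} : IsUnit a ↔ blockRank a = ∑ i, n i := by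
  simp only [Pi.isUnit_iff, isUnit_iff_rank_eq_card, Fintype.card_fin, blockRank,
    Finset.sum_eq_sum_iff_of_le fun i _ ↦ (a i).rank_le_width, Finset.mem_univ, true_imp_iff]

lemma blockEmbed_eq_single (i : Fin k) (A : Matrix (Fin (n i)) (Fin (n i)) K) :
    (blockEmbed i A : BlockAlg K k n) = Pi.single i A := rfl

lemma blockRank_blockEmbed (i : Fin k) (A : Matrix (Fin (n i)) (Fin (n i)) K) :
    blockRank (blockEmbed i A : BlockAlg K k n) = A.rank := by
  rw [blockRank, Finset.sum_eq_single i, blockEmbed_eq_single, Pi.single_eq_same]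
  · intro j _ hj
    rw [blockEmbed_eq_single, Pi.single_eq_of_ne hj, rank_zero]
  · simp

lemma addMonoidHom_ext {G : Type*} [AddCommMonoid G] {f g : BlockAlg F k n →+ G}
    (h : ∀ i v w, f (blockEmbed i (vecMulVec v w)) = g (blockEmbed i (vecMulVec v w))) : f = g := by
  refine AddMonoidHom.functions_ext _ _ _ fun i A ↦ ?_
  have hi : f.comp (AddMonoidHom.single _ i) = g.comp (AddMonoidHom.single _ i) :=
    addMonoidHom_ext_vecMulVec (h i)
  exact DFunLike.congr_fun hi A

lemma subsingleton_of_blockRank_le_one {b : BlockAlg K k n} (hb : blockRank b ≤ 1) :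
    {j | b j ≠ 0}.Subsingleton := by
  intro j hj l hl
  by_contra hjl
  have hpos {i} (hi : b i ≠ 0) : 0 < (b i).rank :=
    Nat.pos_of_ne_zero (rank_eq_zero_iff_eq_zero.not.2 hi)
  have := Finset.add_le_sum (f := fun i ↦ (b i).rank) (fun _ _ ↦ Nat.zero_le _)
    (Finset.mem_univ j) (Finset.mem_univ l) hjl
  have := hpos hj
  have := hpos hl
  unfold blockRank at hb
  omega

variable {Φ : BlockAlg F k n →+ BlockAlg K k n'}

section CharZero

variable [CharZero K]

lemma exists_blockRank_map_lt (hΦ : Function.Surjective Φ) {a : BlockAlg F k n}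
    (ha : ¬ IsUnit (Φ a)) :
    ∃ c, blockRank c ≤ 1 ∧ blockRank (Φ a) < blockRank (Φ (a + c)) := by
  obtain ⟨j, hj⟩ : ∃ j, (Φ a j).det = 0 := by
    simpa [Pi.isUnit_iff, isUnit_iff_isUnit_det] using ha
  obtain ⟨v, hv, hav⟩ := exists_mulVec_eq_zero_iff.2 hj
  obtain ⟨u, hu, hua⟩ := exists_vecMul_eq_zero_iff.2 hj
  let f : BlockAlg K k n' →+ K :=
    AddMonoidHom.mk' (fun b ↦ u ⬝ᵥ b j *ᵥ v) fun b c ↦ by simp [add_mulVec]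
  obtain ⟨i, p, q, hpq⟩ : ∃ i p q, f (Φ (blockEmbed i (vecMulVec p q))) ≠ 0 := by
    by_contra! h
    have hf : f.comp Φ = 0 := addMonoidHom_ext h
    obtain ⟨r, hr⟩ := Function.ne_iff.1 hu
    obtain ⟨s, hs⟩ := Function.ne_iff.1 hv
    obtain ⟨b, hb⟩ := hΦ (blockEmbed j (single r s 1))
    have hfb : u ⬝ᵥ Φ b j *ᵥ v = 0 := DFunLike.congr_fun hf b
    rw [hb, blockEmbed_eq_single, Pi.single_eq_same, single_eq_single_vecMulVec_single,
      vecMulVec_mulVec] at hfb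
    exact mul_ne_zero hs hr (by simpa using hfb)
  set c := blockEmbed (n := n) i (vecMulVec p q)
  have hle : ∀ᶠ t : ℕ in atTop, ∀ l, (Φ a l).rank ≤ (Φ a l + t • Φ c l).rank :=
    eventually_all.2 fun l ↦ eventually_rank_le_rank_add_nsmul _ _
  obtain ⟨t, hle, hlt⟩ := (hle.and (eventually_rank_lt_rank_add_nsmul hav hua hpq)).exists
  refine ⟨t • c, ?_, ?_⟩
  · have hc : t • c = blockEmbed i (vecMulVec (t • p) q) := by
      rw [smul_vecMulVec, blockEmbed_eq_single, Pi.single_smul, ← blockEmbed_eq_single]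
    rw [hc, blockRank_blockEmbed]
    exact rank_vecMulVec_le _ _
  · rw [map_add, map_nsmul]
    exact Finset.sum_lt_sum (fun l _ ↦ hle l) ⟨j, Finset.mem_univ j, hlt⟩

lemma exists_isUnit_map_add (hΦ : Function.Surjective Φ) (a : BlockAlg F k n) :
    ∃ b, IsUnit (Φ (a + b)) ∧ blockRank b + blockRank (Φ a) ≤ ∑ i, n' i := by
  by_cases ha : IsUnit (Φ a)
  · exact ⟨0, by rwa [add_zero], by simpa [blockRank] using blockRank_le (Φ a)⟩
  obtain ⟨c, hc, hlt⟩ := exists_blockRank_map_lt hΦ ha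
  obtain ⟨b, hb, hle⟩ := exists_isUnit_map_add hΦ (a + c)
  exact ⟨c + b, by rwa [← add_assoc], by linarith [blockRank_add_le c b]⟩
termination_by ∑ i, n' i - blockRank (Φ a)
decreasing_by have := blockRank_le (Φ (a + c)); omega

lemma blockRank_map_le (hΦ : Function.Surjective Φ) (hn : ∑ i, n i = ∑ i, n' i)
    (h : ∀ a, ¬ IsUnit a → ¬ IsUnit (Φ a)) (a : BlockAlg F k n) :
    blockRank (Φ a) ≤ blockRank a := by
  obtain ⟨b, hb, hle⟩ := exists_isUnit_map_add hΦ a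
  have hab := isUnit_iff_blockRank_eq.1 (not_imp_not.1 (h (a + b)) hb)
  linarith [blockRank_add_le a b]

end CharZero

/-- The component of `Φ` from the `i`-th block to the `j`-th block, as an additive map of full
matrix algebras. -/
def blockMap (Φ : BlockAlg F k n →+ BlockAlg K k n') (i j : Fin k) :
    Matrix (Fin (n i)) (Fin (n i)) F →+ Matrix (Fin (n' j)) (Fin (n' j)) K :=
  (Pi.evalAddMonoidHom _ j).comp (Φ.comp (AddMonoidHom.single _ i))

variable {Φ : BlockAlg F k n →+ BlockAlg K k n'}

lemma blockMap_apply (i j : Fin k) (A : Matrix (Fin (n i)) (Fin (n i)) F) :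
    blockMap Φ i j A = Φ (blockEmbed i A) j := rfl

lemma rank_blockMap_le (h : ∀ a, blockRank (Φ a) ≤ blockRank a) (i j : Fin k)
    (A : Matrix (Fin (n i)) (Fin (n i)) F) : (blockMap Φ i j A).rank ≤ A.rank :=
  calc (Φ (blockEmbed i A) j).rank
    _ ≤ blockRank (Φ (blockEmbed i A)) :=
      Finset.single_le_sum (f := fun j ↦ (Φ (blockEmbed i A) j).rank) (fun _ _ ↦ Nat.zero_le _)
        (Finset.mem_univ j)
    _ ≤ A.rank := (h _).trans_eq (blockRank_blockEmbed i A)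

lemma map_apply_eq_sum (a : BlockAlg F k n) (j : Fin k) :
    Φ a j = ∑ i, Φ (blockEmbed i (a i)) j := by
  conv_lhs => rw [← Finset.univ_sum_single a, map_sum, Finset.sum_apply]
  rfl

lemma exists_map_blockEmbed_mem_blockSet
    (h : ∀ a, blockRank (Φ a) ≤ blockRank a) (i : Fin k) :
    ∃ j, ∀ A, Φ (blockEmbed i A) ∈ blockSet j := by
  let f : (Fin (n i) → F) →+ (Fin (n i) → F) →+ BlockAlg K k n' :=
    AddMonoidHom.mk' (fun v ↦ AddMonoidHom.mk' (fun w ↦ Φ (blockEmbed i (vecMulVec v w)))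
      fun w w' ↦ by simp [blockEmbed_eq_single, vecMulVec_add, Pi.single_add])
      fun v v' ↦ AddMonoidHom.ext fun w ↦ by
        simp [blockEmbed_eq_single, add_vecMulVec, Pi.single_add]
  have hf v w : {j | f v w j ≠ 0}.Subsingleton :=
    subsingleton_of_blockRank_le_one <| (h _).trans <|
      (blockRank_blockEmbed i _).trans_le (rank_vecMulVec_le _ _)
  by_cases! hzero : ∀ v w j, f v w j = 0
  · refine ⟨i, fun A j _ ↦ ?_⟩
    exact DFunLike.congr_fun (addMonoidHom_ext_vecMulVec (f := blockMap Φ i j) (g := 0)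
      fun v w ↦ hzero v w j) A
  · obtain ⟨v, w, l, hl⟩ := hzero
    refine ⟨l, fun A j hj ↦ ?_⟩
    exact DFunLike.congr_fun (addMonoidHom_ext_vecMulVec (f := blockMap Φ i j) (g := 0)
      fun v' w' ↦ by_contra fun hj' ↦ hj (eq_of_map₂_apply_ne_zero hf hj' hl)) A

lemma surjective_of_map_blockEmbed_mem (hn' : ∀ j, 1 ≤ n' j) (hΦ : Function.Surjective Φ)
    {π : Fin k → Fin k} (hπ : ∀ i A, Φ (blockEmbed i A) ∈ blockSet (π i)) :
    Function.Surjective π := by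
  intro j
  by_contra! hj
  obtain ⟨a, ha⟩ := hΦ 1
  have hzero : (1 : BlockAlg K k n') j = 0 := by
    rw [← ha, map_apply_eq_sum]
    exact Finset.sum_eq_zero fun i _ ↦ hπ i _ j (hj i).symm
  have : Nonempty (Fin (n' j)) := ⟨⟨0, hn' j⟩⟩
  exact one_ne_zero hzero

lemma map_apply_perm {π : Equiv.Perm (Fin k)} (hπ : ∀ i A, Φ (blockEmbed i A) ∈ blockSet (π i))
    (a : BlockAlg F k n) (i : Fin k) : Φ a (π i) = blockMap Φ i (π i) (a i) := by
  rw [map_apply_eq_sum, blockMap_apply, Finset.sum_eq_single i]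
  · exact fun l _ hl ↦ hπ l _ _ (π.injective.ne hl.symm)
  · simp

lemma mem_blockSet_iff_eq_blockEmbed {i : Fin k} {a : BlockAlg K k n} :
    a ∈ blockSet i ↔ a = blockEmbed i (a i) :=
  ⟨fun h ↦ Function.eq_update_iff.2 ⟨rfl, h⟩, fun h ↦ (Function.eq_update_iff.1 h).2⟩

lemma image_blockSet_eq (hΦ : Function.Surjective Φ) {π : Equiv.Perm (Fin k)}
    (hπ : ∀ i A, Φ (blockEmbed i A) ∈ blockSet (π i)) (i : Fin k) :
    Φ '' blockSet i = blockSet (π i) := by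
  have hmem : ∀ a ∈ blockSet i, Φ a ∈ blockSet (π i) := fun a ha ↦
    mem_blockSet_iff_eq_blockEmbed.1 ha ▸ hπ i (a i)
  refine Set.Subset.antisymm (Set.image_subset_iff.2 hmem) fun b hb ↦ ?_
  obtain ⟨a, rfl⟩ := hΦ b
  refine ⟨blockEmbed i (a i), fun j hj ↦ Function.update_of_ne hj _ _, funext fun j ↦ ?_⟩
  by_cases hj : j = π i
  · rw [hj, map_apply_perm hπ a, blockMap_apply]
  · rw [hb j hj, hπ i _ j hj]

lemma exists_perm (hn' : ∀ j, 1 ≤ n' j) (hsum : ∑ i, n i = ∑ j, n' j)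
    (hΦ : Function.Surjective Φ) (h : ∀ a, blockRank (Φ a) ≤ blockRank a) :
    ∃ π : Equiv.Perm (Fin k), (∀ i, n' (π i) = n i) ∧
      ∀ i A, Φ (blockEmbed i A) ∈ blockSet (π i) := by
  choose π₀ hπ₀ using exists_map_blockEmbed_mem_blockSet h
  obtain ⟨π, rfl⟩ : ∃ π : Equiv.Perm (Fin k), ⇑π = π₀ :=
    ⟨.ofBijective π₀ (surjective_of_map_blockEmbed_mem hn' hΦ hπ₀).bijective_of_finite, rfl⟩
  obtain ⟨a, ha⟩ := hΦ 1
  have hle i : n' (π i) ≤ n i := by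
    have hone : blockMap Φ i (π i) (a i) = 1 := by rw [← map_apply_perm hπ₀, ha, Pi.one_apply]
    simpa [hone] using (rank_blockMap_le h i (π i) (a i)).trans (a i).rank_le_width
  refine ⟨π, fun i ↦ ?_, hπ₀⟩
  refine (Finset.sum_eq_sum_iff_of_le fun i _ ↦ hle i).1 ?_ i (Finset.mem_univ i)
  rw [hsum, Equiv.sum_comp]

lemma rankOneNonincreasing_blockMap (h : ∀ a, blockRank (Φ a) ≤ blockRank a) (i j : Fin k) :
    RankOneNonincreasing (blockMap Φ i j) := fun v w ↦
  (rank_blockMap_le h i j _).trans (rank_vecMulVec_le v w)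

lemma isStandard_reindex_blockMap {π : Equiv.Perm (Fin k)} (hΦ : Function.Surjective Φ)
    (h : ∀ a, blockRank (Φ a) ≤ blockRank a)
    (hπ : ∀ i A, Φ (blockEmbed i A) ∈ blockSet (π i)) {i : Fin k} (hi : n' (π i) = n i)
    (hni : 2 ≤ n i) :
    IsStandard fun A ↦ reindex (finCongr hi) (finCongr hi) (blockMap Φ i (π i) A) := by
  have : Nontrivial (Fin (n i)) := Fin.nontrivial_iff_two_le.2 hni
  obtain ⟨a, ha⟩ := hΦ 1
  have hone : blockMap Φ i (π i) (a i) = 1 := by rw [← map_apply_perm hπ, ha, Pi.one_apply]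
  have hai : IsUnit (a i) := by
    rw [isUnit_iff_rank_eq_card, Fintype.card_fin]
    refine (rank_le_width _).antisymm ?_
    simpa [hone, hi] using rank_blockMap_le h i (π i) (a i)
  let Ψ := (reindexAddEquiv K (finCongr hi) (finCongr hi)).toAddMonoidHom.comp (blockMap Φ i (π i))
  have hΨ : RankOneNonincreasing Ψ := fun v w ↦
    (rank_reindex _ _ _).trans_le (rankOneNonincreasing_blockMap h i (π i) v w)
  exact hΨ.isStandard hai (by simp [Ψ, hone])

lemma not_isUnit_map_of_isStandard {π : Equiv.Perm (Fin k)} (hn' : ∀ j, 1 ≤ n' j)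
    (hn : ∀ i, n' (π i) = n i) (hπ : ∀ i A, Φ (blockEmbed i A) ∈ blockSet (π i))
    (hstd : ∀ i, 2 ≤ n i →
      IsStandard fun A ↦ reindex (finCongr (hn i)) (finCongr (hn i)) (blockMap Φ i (π i) A))
    {a : BlockAlg F k n} (ha : ¬ IsUnit a) : ¬ IsUnit (Φ a) := by
  refine mt (fun h ↦ Pi.isUnit_iff.2 fun i ↦ ?_) ha
  have hi : IsUnit (blockMap Φ i (π i) (a i)) := map_apply_perm hπ a i ▸ Pi.isUnit_iff.1 h (π i)
  rcases le_or_gt 2 (n i) with hni | hni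
  · rw [← (hstd i hni).isUnit_iff]
    exact hi.map (reindexAlgEquiv K K (finCongr (hn i)))
  · have : Nonempty (Fin (n' (π i))) := Fin.pos_iff_nonempty.1 (hn' _)
    have hne : a i ≠ 0 := fun h0 ↦ hi.ne_zero (by rw [h0, map_zero])
    have hrank : (a i).rank ≠ 0 := mt rank_eq_zero_iff_eq_zero.1 hne
    have hle : (a i).rank ≤ n i := rank_le_width _
    rw [isUnit_iff_rank_eq_card, Fintype.card_fin]
    lia

end BlockAlg

open BlockAlg

theorem stmt3_general {F K : Type*} [Field F] [Field K] [CharZero K] {k : ℕ} {n n' : Fin k → ℕ}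
    (hn' : ∀ j, 1 ≤ n' j) (hsum : ∑ i, n i = ∑ j, n' j) (Φ : BlockAlg F k n →+ BlockAlg K k n')
    (hsurj : Function.Surjective Φ) :
    (∀ a, ¬ IsUnit a → ¬ IsUnit (Φ a)) ↔
      ∃ (π : Equiv.Perm (Fin k)) (hπ : ∀ i, n' (π i) = n i),
        (∀ i, Φ '' blockSet i = blockSet (π i)) ∧
        ∀ i, 2 ≤ n i → IsStandard fun A ↦
          reindex (finCongr (hπ i)) (finCongr (hπ i)) (Φ (blockEmbed i A) (π i)) := by
  constructor
  · intro h
    have hrank := blockRank_map_le hsurj hsum h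
    obtain ⟨π, hn, hπ⟩ := exists_perm hn' hsum hsurj hrank
    exact ⟨π, hn, image_blockSet_eq hsurj hπ, fun i ↦
      isStandard_reindex_blockMap hsurj hrank hπ (hn i)⟩
  · rintro ⟨π, hn, himage, hstd⟩ a
    have hπ i A : Φ (blockEmbed i A) ∈ blockSet (π i) :=
      himage i ▸ Set.mem_image_of_mem Φ fun j hj ↦ Function.update_of_ne hj _ _
    exact not_isUnit_map_of_isStandard hn' hn hπ hstd

theorem stmt3 {𝔽 : Type*} [Field 𝔽] [CharZero 𝔽] {k : ℕ} (n : Fin k → ℕ) (hk : 1 ≤ k)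
    (hn : ∀ i, 1 ≤ n i)
    (Φ : BlockAlg 𝔽 k n → BlockAlg 𝔽 k n)
    (hadd : ∀ x y, Φ (x + y) = Φ x + Φ y)
    (hsurj : Function.Surjective Φ) :
    (∀ a, ¬ IsUnit a → ¬ IsUnit (Φ a)) ↔
      ∃ (π : Equiv.Perm (Fin k)) (hπ : ∀ i, n (π i) = n i),
        (∀ i, Φ '' blockSet i = blockSet (π i)) ∧
        ∀ i, 2 ≤ n i →
          ∃ (σ : 𝔽 →+* 𝔽) (P Q : Matrix (Fin (n i)) (Fin (n i)) 𝔽),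
            IsUnit P ∧ IsUnit Q ∧
            ((∀ A : Matrix (Fin (n i)) (Fin (n i)) 𝔽,
                Φ (blockEmbed i A) (π i) =
                  Matrix.reindex (finCongr (hπ i).symm) (finCongr (hπ i).symm)
                    (P * A.map σ * Q)) ∨
             (∀ A : Matrix (Fin (n i)) (Fin (n i)) 𝔽,
                Φ (blockEmbed i A) (π i) =
                  Matrix.reindex (finCongr (hπ i).symm) (finCongr (hπ i).symm)
                    (P * (Aᵀ).map σ * Q))) := by
  simpa only [isStandard_reindex_iff, finCongr_symm, AddMonoidHom.mk'_apply] using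
    stmt3_general hn rfl (AddMonoidHom.mk' Φ hadd) hsurj
end

section
/- Let 𝔽 be a field of characteristic zero and let 𝒜 = M_{n_1}(𝔽) ⊕ ⋯ ⊕ M_{n_k}(𝔽). If Φ : 𝒜 → 𝒜 is an additive surjection that maps singular elements to singular elements, then Φ maps every element of rank one to an element of rank one or to zero. -/
/-- The rank of a block-diagonal element, i.e. the sum of the ranks of its blocks. -/
noncomputable def blockRank {𝔽 : Type*} [Field 𝔽] {k : ℕ} {n : Fin k → ℕ}
    (a : BlockAlg 𝔽 k n) : ℕ :=
  ∑ i : Fin k, (a i).rank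

/-!
An additive map `Φ` is `ℚ`-linear, so `det (Φ (x + t y))` is a polynomial in `t ∈ ℚ`; this lets
Zariski-density arguments replace linearity over `𝔽`.

Restrict `Φ` to the matrices with entries in `k = ℚ` and extend that restriction `𝔽`-linearly to
`Ψ`. By density `Ψ` still preserves singularity, and then `det (Ψ x) = det (Ψ 1) * det x`: for
diagonal `x` both sides agree at as many points of a line as the degree requires, and conjugates of
diagonal matrices generate the group of units. Hence `Ψ` is bijective, and since `rank b` is the
largest degree in `t` of `det (t b + c)` over all `c`, it does not increase rank. So
`rank (Φ d) ≤ rank d` for a diagonal `0`-`1` matrix `d` as soon as `Φ 1` is invertible, and by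
translation `rank (Φ (w d q)) ≤ rank d` as soon as `Φ (w q)` is invertible.

For an arbitrary `a = p d q` with `p`, `q` invertible and `Φ u` invertible, take
`w = u q⁻¹ + t p` with `t ∈ ℚ`. Then `Φ (w q)` is invertible and
`Φ (w d q) = Φ (u q⁻¹ d q) + t Φ a` has rank at least `rank (Φ a)` for all but finitely many `t`.
-/

open scoped Polynomial

/-- The block-diagonal matrices over `R` with one square block, indexed by `m i`, for each `i`;
`BlockAlg` is the case where every `m i` is a `Fin` type. -/
abbrev BlockMatrix {ι : Type*} (m : ι → Type*) (R : Type*) := ∀ i, Matrix (m i) (m i) R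

namespace BlockMatrix

section Rank

variable {ι : Type*} [Fintype ι] {m : ι → Type*} [∀ i, Fintype (m i)] {R : Type*} [CommRing R]
  {F : Type*} [Field F]

/-- The rank of a block-diagonal matrix: the sum of the ranks of its blocks. -/
noncomputable def rank (x : BlockMatrix m R) : ℕ := ∑ i, (x i).rank

theorem rank_add_le (x y : BlockMatrix m F) : rank (x + y) ≤ rank x + rank y := by
  rw [rank, rank, rank, ← Finset.sum_add_distrib]
  refine Finset.sum_le_sum fun i _ => ?_
  rw [Pi.add_apply, Matrix.rank, Matrix.mulVecLin_add]
  exact (Submodule.finrank_mono (LinearMap.range_add_le _ _)).trans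
    (Submodule.finrank_add_le_finrank_add_finrank _ _)

theorem rank_smul_le (t : F) (x : BlockMatrix m F) : rank (t • x) ≤ rank x := by
  classical
  refine Finset.sum_le_sum fun i _ => ?_
  rw [Pi.smul_apply, ← Matrix.one_mul (x i), ← Matrix.smul_mul, Matrix.one_mul]
  exact Matrix.rank_mul_le_right _ _

variable [∀ i, DecidableEq (m i)]

theorem rank_mul_isUnit (x : BlockMatrix m R) {u : BlockMatrix m R} (hu : IsUnit u) :
    rank (x * u) = rank x :=
  Finset.sum_congr rfl fun i _ => Matrix.rank_mul_eq_left_of_isUnit_det _ _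
    ((Matrix.isUnit_iff_isUnit_det _).1 (Pi.isUnit_iff.1 hu i))

theorem rank_isUnit_mul {u : BlockMatrix m R} (hu : IsUnit u) (x : BlockMatrix m R) :
    rank (u * x) = rank x :=
  Finset.sum_congr rfl fun i _ => Matrix.rank_mul_eq_right_of_isUnit_det _ _
    ((Matrix.isUnit_iff_isUnit_det _).1 (Pi.isUnit_iff.1 hu i))

theorem rank_of_isUnit [Nontrivial R] {x : BlockMatrix m R} (hx : IsUnit x) :
    rank x = Fintype.card (Σ i, m i) := by
  rw [Fintype.card_sigma]
  exact Finset.sum_congr rfl fun i _ => Matrix.rank_of_isUnit _ (Pi.isUnit_iff.1 hx i)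

end Rank

section NormalForm

variable {ι : Type*} {m : ι → Type*} [∀ i, Fintype (m i)] [∀ i, DecidableEq (m i)]
  {R : Type*} [CommRing R] {F : Type*} [Field F]

/-- The diagonal matrix with prescribed diagonal, whose entries are indexed by the disjoint union
of the index types of the blocks. -/
def diagonal : ((Σ i, m i) → R) →+* BlockMatrix m R where
  toFun d i := Matrix.diagonal fun p => d ⟨i, p⟩
  map_one' := funext fun _ => Matrix.diagonal_one
  map_mul' _ _ := funext fun _ => (Matrix.diagonal_mul_diagonal _ _).symm
  map_zero' := funext fun _ => Matrix.diagonal_zero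
  map_add' _ _ := funext fun _ => (Matrix.diagonal_add _ _).symm

theorem blockDiagonal'_diagonal [DecidableEq ι] (d : (Σ i, m i) → R) :
    Matrix.blockDiagonal' (diagonal d) = Matrix.diagonal d :=
  Matrix.blockDiagonal'_diagonal _

/-- The diagonal idempotent with ones exactly at the places in `s`; up to multiplication by units on
both sides, every block-diagonal matrix over a field is one of these. -/
noncomputable def diagIdem (s : Finset (Σ i, m i)) : BlockMatrix m R :=
  diagonal ((s : Set (Σ i, m i)).indicator 1)

theorem rank_diagIdem [Fintype ι] (s : Finset (Σ i, m i)) :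
    rank (diagIdem s : BlockMatrix m F) = s.card := by
  classical
  have hs : s = Finset.univ.sigma fun i => {p | (⟨i, p⟩ : Σ i, m i) ∈ s} := by ext; simp
  conv_rhs => rw [hs, Finset.card_sigma]
  refine Finset.sum_congr rfl fun i _ => ?_
  simp [diagIdem, diagonal, Matrix.rank_diagonal, Fintype.card_subtype, Set.indicator_apply]

theorem exists_isUnit_mul_diagonal_indicator_mul {n : Type*} [Fintype n] [DecidableEq n]
    (M : Matrix n n F) : ∃ (P Q : Matrix n n F) (s : Set n),
      IsUnit P ∧ IsUnit Q ∧ M = P * Matrix.diagonal (s.indicator 1) * Q := by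
  obtain ⟨V, U, e, ⟨V, rfl⟩, ⟨U, rfl⟩, h⟩ := M.exists_rank_normal_form
  refine ⟨↑V⁻¹, ↑U⁻¹, {i | (e i).isLeft}, V⁻¹.isUnit, U⁻¹.isUnit, ?_⟩
  have hdiag : Matrix.diagonal ({i | (e i).isLeft}.indicator 1) =
      (V : Matrix n n F) * M * (U : Matrix n n F) := by
    rw [h, ← Matrix.diagonal_one, ← Matrix.diagonal_zero, Matrix.fromBlocks_diagonal,
      Matrix.submatrix_diagonal_equiv]
    congr 1
    ext i
    rcases h : e i <;> simp [h]
  simp [hdiag, mul_assoc]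

theorem exists_eq_mul_diagIdem_mul [Fintype ι] (x : BlockMatrix m F) :
    ∃ (p q : (BlockMatrix m F)ˣ) (s : Finset (Σ i, m i)),
      s.card = rank x ∧ x = p.1 * diagIdem s * q.1 := by
  classical
  choose p q s hp hq hx using fun i => exists_isUnit_mul_diagonal_indicator_mul (x i)
  lift p to (BlockMatrix m F)ˣ using Pi.isUnit_iff.2 hp
  lift q to (BlockMatrix m F)ˣ using Pi.isUnit_iff.2 hq
  replace hx : x = p.1 * diagIdem {y : Σ i, m i | y.2 ∈ s y.1} * q.1 := by
    funext i
    simp only [hx i, Pi.mul_apply]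
    congr 3
    ext y
    simp [Set.indicator_apply]
  refine ⟨p, q, _, ?_, hx⟩
  rw [hx, rank_mul_isUnit _ q.isUnit, rank_isUnit_mul p.isUnit, rank_diagIdem]

end NormalForm

theorem rank_eq_zero {ι : Type*} [Fintype ι] {m : ι → Type*} [∀ i, Fintype (m i)] {F : Type*}
    [Field F] {x : BlockMatrix m F} : rank x = 0 ↔ x = 0 := by
  classical
  refine ⟨fun h => ?_, fun h => by simp [h, rank]⟩
  obtain ⟨p, q, s, hs, rfl⟩ := exists_eq_mul_diagIdem_mul x
  rw [h, Finset.card_eq_zero] at hs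
  rw [hs, diagIdem, Finset.coe_empty, Set.indicator_empty', map_zero, mul_zero, zero_mul]

section Det

variable {ι : Type*} [Fintype ι] [DecidableEq ι] {m : ι → Type*} [∀ i, Fintype (m i)]
  [∀ i, DecidableEq (m i)] {R : Type*} [CommRing R] {F : Type*} [Field F]

/-- The determinant of a block-diagonal matrix, seen as one matrix indexed by `Σ i, m i`. -/
noncomputable def det : BlockMatrix m R →* R :=
  Matrix.detMonoidHom.comp (Matrix.blockDiagonal'RingHom m R).toMonoidHom

theorem det_apply (x : BlockMatrix m R) : det x = (Matrix.blockDiagonal' x).det := rfl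

theorem det_diagonal (d : (Σ i, m i) → R) : det (diagonal d) = ∏ x, d x := by
  rw [det_apply, blockDiagonal'_diagonal, Matrix.det_diagonal]

theorem det_diagIdem (s : Finset (Σ i, m i)) :
    det (diagIdem s : BlockMatrix m R) = if s = Finset.univ then 1 else 0 := by
  simp only [diagIdem, det_diagonal, Set.indicator_apply, Finset.mem_coe, Pi.one_apply,
    Finset.prod_ite_zero, Finset.prod_const_one, Finset.mem_univ, true_imp_iff,
    Finset.eq_univ_iff_forall]

theorem isUnit_iff_det_ne_zero {x : BlockMatrix m F} : IsUnit x ↔ det x ≠ 0 := by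
  refine ⟨fun h => (h.map det).ne_zero, fun h => ?_⟩
  obtain ⟨p, q, s, -, rfl⟩ := exists_eq_mul_diagIdem_mul x
  obtain rfl : s = Finset.univ := by
    rw [map_mul, map_mul, det_diagIdem] at h
    by_contra hs
    simp [hs] at h
  rw [diagIdem, Finset.coe_univ, Set.indicator_univ, map_one, mul_one]
  exact p.isUnit.mul q.isUnit

theorem det_smul_diagIdem_add_diagIdem_compl (s : Finset (Σ i, m i)) (t : R) :
    det (t • diagIdem s + diagIdem sᶜ) = t ^ s.card := by
  have h : t • diagIdem s + diagIdem sᶜ = (diagonal fun x => if x ∈ s then t else 1) := by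
    ext i p q
    by_cases hp : (⟨i, p⟩ : Σ i, m i) ∈ s <;> simp [diagIdem, diagonal, hp, Matrix.diagonal_apply]
  rw [h, det_diagonal, Finset.prod_ite_mem, Finset.univ_inter, Finset.prod_const]

theorem exists_det_smul_add_eq_mul_pow_rank (b : BlockMatrix m F) :
    ∃ c : BlockMatrix m F, rank b + rank c = Fintype.card (Σ i, m i) ∧
      ∃ u : F, u ≠ 0 ∧ ∀ t : F, det (t • b + c) = u * t ^ rank b := by
  obtain ⟨p, q, s, hs, hb⟩ := exists_eq_mul_diagIdem_mul b
  refine ⟨p.1 * diagIdem sᶜ * q.1, ?_, det p.1 * det q.1, ?_, fun t => ?_⟩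
  · rw [rank_mul_isUnit _ q.isUnit, rank_isUnit_mul p.isUnit, rank_diagIdem, ← hs,
      Finset.card_add_card_compl]
  · exact mul_ne_zero (isUnit_iff_det_ne_zero.1 p.isUnit) (isUnit_iff_det_ne_zero.1 q.isUnit)
  · have hfactor : t • b + p.1 * diagIdem sᶜ * q.1 =
        p.1 * (t • diagIdem s + diagIdem sᶜ) * q.1 := by
      rw [hb, mul_add, add_mul, mul_smul_comm, smul_mul_assoc]
    rw [hfactor, map_mul, map_mul, det_smul_diagIdem_add_diagIdem_compl, hs, mul_right_comm]

/-- The polynomial whose value at `t` is `det (t • a + b)`. -/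
noncomputable def pencil (a b : BlockMatrix m R) : R[X] :=
  Matrix.det ((Polynomial.X : R[X]) • (Matrix.blockDiagonal' a).map Polynomial.C +
    (Matrix.blockDiagonal' b).map Polynomial.C)

theorem eval_pencil (a b : BlockMatrix m R) (t : R) :
    (pencil a b).eval t = det (t • a + b) := by
  rw [pencil, ← Polynomial.coe_evalRingHom, RingHom.map_det, det_apply]
  congr 1
  ext x y
  simpa [Matrix.blockDiagonal'_add, Matrix.blockDiagonal'_smul] using mul_comm _ _

theorem natDegree_pencil_le_card (a b : BlockMatrix m R) :
    (pencil a b).natDegree ≤ Fintype.card (Σ i, m i) :=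
  Polynomial.natDegree_det_X_add_C_le _ _

theorem coeff_pencil_card (a b : BlockMatrix m R) :
    (pencil a b).coeff (Fintype.card (Σ i, m i)) = det a :=
  Polynomial.coeff_det_X_add_C_card _ _

theorem natDegree_pencil_diagIdem_le (s : Finset (Σ i, m i)) (b : BlockMatrix m R) :
    (pencil (diagIdem s) b).natDegree ≤ s.card := by
  rw [pencil, Matrix.det_apply]
  refine Polynomial.natDegree_sum_le_of_forall_le _ _ fun σ _ => ?_
  refine (Polynomial.natDegree_smul_le _ _).trans ((Polynomial.natDegree_prod_le _ _).trans ?_)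
  calc _ ≤ ∑ x, if x ∈ s then 1 else 0 := Finset.sum_le_sum fun x _ => ?_
    _ = s.card := by simp
  rw [diagIdem, blockDiagonal'_diagonal, Matrix.add_apply, Matrix.smul_apply, Matrix.map_apply,
    Matrix.map_apply, smul_eq_mul]
  refine Polynomial.natDegree_add_C.trans_le ?_
  by_cases hx : x ∈ s
  · rw [if_pos hx]
    exact (Polynomial.natDegree_mul_C_le _ _).trans Polynomial.natDegree_X_le
  · rw [if_neg hx]
    by_cases hσ : σ x = x <;> simp [hx, hσ]

theorem natDegree_pencil_le_rank [Infinite F] (a b : BlockMatrix m F) :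
    (pencil a b).natDegree ≤ rank a := by
  obtain ⟨p, q, s, hs, ha⟩ := exists_eq_mul_diagIdem_mul a
  have hpencil : pencil a b =
      Polynomial.C (det p.1 * det q.1) * pencil (diagIdem s) (p⁻¹.1 * b * q⁻¹.1) := by
    refine Polynomial.funext fun t => ?_
    rw [Polynomial.eval_mul, Polynomial.eval_C, eval_pencil, eval_pencil, mul_right_comm,
      ← map_mul, ← map_mul]
    congr 1
    simp [ha, mul_add, add_mul, mul_assoc]
  rw [hpencil, ← hs]
  exact (Polynomial.natDegree_C_mul_le _ _).trans (natDegree_pencil_diagIdem_le s _)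

theorem finite_setOf_det_add_smul_eq_zero {a : BlockMatrix m F} (ha : det a ≠ 0)
    (b : BlockMatrix m F) : {t : F | det (a + t • b) = 0}.Finite := by
  have hpencil : pencil b a ≠ 0 := fun h => ha (by simpa [h] using (eval_pencil b a 0).symm)
  refine (Polynomial.finite_setOfPred_isRoot hpencil).subset fun t ht => ?_
  change (pencil b a).eval t = 0
  rw [eval_pencil, add_comm]
  exact ht

end Det

theorem finite_setOf_rank_add_smul_lt {ι : Type*} [Fintype ι] {m : ι → Type*} [∀ i, Fintype (m i)]
    {F : Type*} [Field F] (a b : BlockMatrix m F) :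
    {t : F | rank (a + t • b) < rank b}.Finite := by
  classical
  obtain ⟨c, hrank, u, hu, hdet⟩ := exists_det_smul_add_eq_mul_pow_rank b
  have hlead : det (b + c) ≠ 0 := by
    rwa [← one_smul F b, hdet, one_pow, mul_one]
  have hpencil : pencil (b + c) a ≠ 0 := fun h => hlead (by simp [← coeff_pencil_card _ a, h])
  refine (Polynomial.finite_setOfPred_isRoot hpencil).subset fun t ht => ?_
  by_contra hroot
  have hunit : IsUnit ((a + t • b) + t • c) := by
    change ¬ (pencil (b + c) a).eval t = 0 at hroot
    rw [eval_pencil] at hroot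
    rwa [add_assoc, ← smul_add, add_comm, isUnit_iff_det_ne_zero]
  rw [Set.mem_ofPred_eq, ← not_le] at ht
  refine ht (Nat.le_of_add_le_add_right (b := rank c) ?_)
  calc rank b + rank c = rank ((a + t • b) + t • c) := by rw [hrank, rank_of_isUnit hunit]
    _ ≤ rank (a + t • b) + rank (t • c) := rank_add_le _ _
    _ ≤ rank (a + t • b) + rank c := Nat.add_le_add_left (rank_smul_le t c) _

section LinearPreserver

variable {ι : Type*} [Fintype ι] [DecidableEq ι] {m : ι → Type*} [∀ i, Fintype (m i)]
  [∀ i, DecidableEq (m i)] {F : Type*} [Field F]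

theorem det_eq_det_mul_prod_of_injective {a b : BlockMatrix m F} {r : (Σ i, m i) → F}
    (hr : Function.Injective r) (h : ∀ x, det (b - r x • a) = 0) :
    det b = det a * ∏ x, r x := by
  set q : F[X] := ∏ x, (Polynomial.X + Polynomial.C (r x)) with hq
  have hmonic : q.Monic := Polynomial.monic_prod_of_monic _ _ fun x _ => Polynomial.monic_X_add_C _
  have hdeg : q.natDegree = Fintype.card (Σ i, m i) := by
    rw [hq, Polynomial.natDegree_prod_of_monic _ _ fun x _ => Polynomial.monic_X_add_C _]
    simp
  have hpencil : pencil a b = Polynomial.C (det a) * q := by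
    refine Polynomial.eq_of_degree_sub_lt_of_eval_index_eq Finset.univ
      (v := fun x => -r x) (neg_injective.comp hr).injOn ?_ fun x _ => ?_
    · rw [Finset.card_univ, Polynomial.degree_lt_iff_coeff_zero]
      intro n hn
      rcases hn.eq_or_lt with rfl | hlt
      · rw [Polynomial.coeff_sub, coeff_pencil_card, Polynomial.coeff_C_mul, ← hdeg,
          hmonic.coeff_natDegree, mul_one, sub_self]
      · refine Polynomial.coeff_eq_zero_of_natDegree_lt (lt_of_le_of_lt ?_ hlt)
        exact (Polynomial.natDegree_sub_le_of_le (natDegree_pencil_le_card a b)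
          ((Polynomial.natDegree_C_mul_le _ _).trans hdeg.le)).trans_eq (max_self _)
    · have hroot : q.eval (-r x) = 0 := by
        rw [hq, Polynomial.eval_prod]
        exact Finset.prod_eq_zero (Finset.mem_univ x) (by simp)
      rw [eval_pencil, Polynomial.eval_mul, hroot, mul_zero, neg_smul, neg_add_eq_sub, h x]
  simpa [eval_pencil, hq, Polynomial.eval_prod] using congr(Polynomial.eval 0 $hpencil)

theorem finite_setOf_not_injective_add_smul {α : Type*} [Finite α] (d : α → F) {j : α → F}
    (hj : Function.Injective j) : {t : F | ¬ Function.Injective (d + t • j)}.Finite := by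
  refine (Set.finite_range fun p : α × α => (d p.2 - d p.1) / (j p.1 - j p.2)).subset ?_
  intro t ht
  rw [Set.mem_ofPred_eq, Function.not_injective_iff] at ht
  obtain ⟨x, y, heq, hne⟩ := ht
  refine ⟨(x, y), ?_⟩
  rw [div_eq_iff (sub_ne_zero.2 (hj.ne hne))]
  simp only [Pi.add_apply, Pi.smul_apply, smul_eq_mul] at heq
  linear_combination -heq

variable {Ψ : BlockMatrix m F →ₗ[F] BlockMatrix m F}

theorem det_map_mul_diagonal_mul_of_injective (hΨ : ∀ x, det x = 0 → det (Ψ x) = 0)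
    (y z : BlockMatrix m F) {d : (Σ i, m i) → F} (hd : Function.Injective d) :
    det (Ψ (y * diagonal d * z)) = det (Ψ (y * z)) * ∏ x, d x := by
  refine det_eq_det_mul_prod_of_injective hd fun x => ?_
  have hsing : det (diagonal (d - Function.const _ (d x)) : BlockMatrix m F) = 0 := by
    rw [det_diagonal]
    exact Finset.prod_eq_zero (Finset.mem_univ x) (sub_self _)
  have hfactor : y * diagonal d * z - d x • (y * z) =
      y * diagonal (d - Function.const _ (d x)) * z := by
    have hconst : diagonal (Function.const _ (d x)) = d x • (1 : BlockMatrix m F) := by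
      ext i p q
      simp [diagonal, Matrix.diagonal_apply, Matrix.one_apply]
    rw [map_sub, hconst, mul_sub, sub_mul, mul_smul_comm, mul_one, smul_mul_assoc]
  rw [← map_smul, ← map_sub, hfactor]
  exact hΨ _ (by rw [map_mul, map_mul, hsing, mul_zero, zero_mul])

theorem det_map_mul_diagonal_mul [Infinite F] (hΨ : ∀ x, det x = 0 → det (Ψ x) = 0)
    (y z : BlockMatrix m F) (d : (Σ i, m i) → F) :
    det (Ψ (y * diagonal d * z)) = det (Ψ (y * z)) * ∏ x, d x := by
  obtain ⟨j, hj⟩ : ∃ j : (Σ i, m i) → F, Function.Injective j :=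
    ⟨_, (Function.Embedding.trans (Fintype.equivFin _).toEmbedding
      (Fin.valEmbedding.trans (Infinite.natEmbedding F))).injective⟩
  have hpencil : pencil (Ψ (y * diagonal j * z)) (Ψ (y * diagonal d * z)) =
      Polynomial.C (det (Ψ (y * z))) * pencil (diagonal j) (diagonal d) := by
    refine Polynomial.eq_of_infinite_eval_eq _ _
      ((finite_setOf_not_injective_add_smul d hj).infinite_compl.mono fun t ht => ?_)
    rw [Set.mem_compl_iff, Set.mem_ofPred_eq, not_not] at ht
    have hdiag : t • (diagonal j : BlockMatrix m F) + diagonal d = diagonal (d + t • j) := by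
      ext i p q
      by_cases hpq : p = q <;> simp [diagonal, hpq, add_comm]
    change Polynomial.eval t _ = Polynomial.eval t _
    rw [Polynomial.eval_mul, Polynomial.eval_C, eval_pencil, eval_pencil, hdiag, det_diagonal,
      ← det_map_mul_diagonal_mul_of_injective hΨ y z ht, ← hdiag, ← map_smul, ← map_add]
    congr 2
    rw [mul_add, add_mul, mul_smul_comm, smul_mul_assoc]
  simpa [eval_pencil, det_diagonal] using congr(Polynomial.eval 0 $hpencil)

/-- The block-diagonal matrices `g` such that inserting `g` into any product `x * y` multiplies
`det ∘ Ψ` by `det g`. -/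
def detMultipliers (Ψ : BlockMatrix m F →ₗ[F] BlockMatrix m F) : Submonoid (BlockMatrix m F) where
  carrier := {g | ∀ x y, det (Ψ (x * g * y)) = det (Ψ (x * y)) * det g}
  one_mem' x y := by rw [map_one, mul_one, mul_one]
  mul_mem' {g h} hg hh x y := by
    rw [← mul_assoc, hh, hg, map_mul det, mul_assoc]

theorem conj_diagonal_mem_detMultipliers [Infinite F] (hΨ : ∀ x, det x = 0 → det (Ψ x) = 0)
    (u : (BlockMatrix m F)ˣ) (d : (Σ i, m i) → F) :
    u.1 * diagonal d * u⁻¹.1 ∈ detMultipliers Ψ := fun x y => by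
  have hdet : det (u.1 * diagonal d * u⁻¹.1) = ∏ x, d x := by
    rw [map_mul, map_mul, mul_right_comm, ← map_mul, u.mul_inv, map_one, one_mul, det_diagonal]
  have hmul := det_map_mul_diagonal_mul hΨ (x * u) (u⁻¹ * y) d
  rw [← hdet, mul_assoc x u.1 (_ * y), u.mul_inv_cancel_left] at hmul
  simpa only [mul_assoc] using hmul

theorem mulSingle_diagonal_mem_detMultipliers [Infinite F] (hΨ : ∀ x, det x = 0 → det (Ψ x) = 0)
    (i : ι) (d : m i → F) (u : (Matrix (m i) (m i) F)ˣ) :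
    Pi.mulSingle i (u.1 * Matrix.diagonal d * u⁻¹.1) ∈ detMultipliers Ψ := by
  have hdiag : (Pi.mulSingle i (Matrix.diagonal d) : BlockMatrix m F) =
      diagonal fun x => (Pi.mulSingle i d : ∀ j, m j → F) x.1 x.2 := by
    refine funext fun j => ?_
    exact (Pi.apply_mulSingle (fun j (e : m j → F) => Matrix.diagonal e)
      (fun j => Matrix.diagonal_one) i d j).symm
  have hu := conj_diagonal_mem_detMultipliers hΨ
    (Units.map (MonoidHom.mulSingle (fun i => Matrix (m i) (m i) F) i) u)
    fun x => (Pi.mulSingle i d : ∀ j, m j → F) x.1 x.2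
  rw [← hdiag] at hu
  rw [Pi.mulSingle_mul, Pi.mulSingle_mul]
  exact hu

theorem diagonal_mul_transvection_mul_diagonal_inv {n : Type*} [Fintype n] [DecidableEq n]
    {p q : n} (hpq : p ≠ q) {a : F} (ha : a ≠ 0) (c : F) :
    Matrix.diagonal (Pi.mulSingle p a) * Matrix.transvection p q c *
      Matrix.diagonal (Pi.mulSingle p a⁻¹) = Matrix.transvection p q (a * c) := by
  have hdiag : Matrix.diagonal (Pi.mulSingle p a) * Matrix.diagonal (Pi.mulSingle p a⁻¹) =
      (1 : Matrix n n F) := by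
    rw [Matrix.diagonal_mul_diagonal, ← Matrix.diagonal_one]
    congr 1
    ext i
    by_cases h : i = p <;> simp [h, ha]
  rw [Matrix.transvection, mul_add, add_mul, mul_one, hdiag, Matrix.transvection]
  congr 1
  ext i j
  simp only [Matrix.mul_diagonal, Matrix.diagonal_mul, Matrix.single_apply, Pi.mulSingle_apply]
  grind

theorem mulSingle_transvection_mem_detMultipliers [Infinite F]
    (hΨ : ∀ x, det x = 0 → det (Ψ x) = 0) (i : ι) {p q : m i} (hpq : p ≠ q) (c : F) :
    Pi.mulSingle i (Matrix.transvection p q c) ∈ detMultipliers Ψ := by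
  obtain ⟨a, ha⟩ := (Set.toFinite {(0 : F), 1}).infinite_compl.nonempty
  obtain ⟨ha0, ha1⟩ : a ≠ 0 ∧ a ≠ 1 := by simpa using ha
  obtain ⟨b, rfl⟩ : ∃ b, c = a * b + -b := ⟨c / (a - 1), by
    rw [← sub_eq_add_neg, ← sub_one_mul, mul_div_cancel₀ c (sub_ne_zero.2 ha1)]⟩
  let T : (Matrix (m i) (m i) F)ˣ := ⟨Matrix.transvection p q b, Matrix.transvection p q (-b),
    by simp [Matrix.transvection_mul_transvection_same, hpq],
    by simp [Matrix.transvection_mul_transvection_same, hpq]⟩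
  have hcomm : Matrix.transvection p q (a * b + -b) = Matrix.diagonal (Pi.mulSingle p a) *
      (T.1 * Matrix.diagonal (Pi.mulSingle p a⁻¹) * T⁻¹.1) := by
    rw [← mul_assoc, ← mul_assoc, diagonal_mul_transvection_mul_diagonal_inv hpq ha0]
    exact (Matrix.transvection_mul_transvection_same p q hpq _ _).symm
  rw [hcomm, Pi.mulSingle_mul]
  refine mul_mem ?_ (mulSingle_diagonal_mem_detMultipliers hΨ i _ T)
  simpa using mulSingle_diagonal_mem_detMultipliers hΨ i (Pi.mulSingle p a) 1

theorem mulSingle_mem_detMultipliers [Infinite F] (hΨ : ∀ x, det x = 0 → det (Ψ x) = 0)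
    (i : ι) {M : Matrix (m i) (m i) F} (hM : M.det ≠ 0) :
    (Pi.mulSingle i M : BlockMatrix m F) ∈ detMultipliers Ψ := by
  refine Matrix.diagonal_transvection_induction_of_det_ne_zero
    (fun M => (Pi.mulSingle i M : BlockMatrix m F) ∈ detMultipliers Ψ) M hM
    (fun D _ => ?_) (fun t => ?_) fun A B _ _ hA hB => ?_
  · simpa using mulSingle_diagonal_mem_detMultipliers hΨ i D 1
  · exact mulSingle_transvection_mem_detMultipliers hΨ i t.hij t.c
  · rw [Pi.mulSingle_mul]
    exact mul_mem hA hB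

theorem mem_detMultipliers_of_isUnit [Infinite F] (hΨ : ∀ x, det x = 0 → det (Ψ x) = 0)
    {g : BlockMatrix m F} (hg : IsUnit g) : g ∈ detMultipliers Ψ := by
  have hprod := Submonoid.noncommProd_mem (detMultipliers Ψ) Finset.univ
    (fun i => Pi.mulSingle i (g i)) (fun i _ j _ _ => Pi.mulSingle_apply_commute g i j)
    fun i _ => mulSingle_mem_detMultipliers hΨ i
      ((Matrix.isUnit_iff_isUnit_det _).1 (Pi.isUnit_iff.1 hg i)).ne_zero
  exact Finset.noncommProd_mulSingle g ▸ hprod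

theorem det_map [Infinite F] (hΨ : ∀ x, det x = 0 → det (Ψ x) = 0) (x : BlockMatrix m F) :
    det (Ψ x) = det (Ψ 1) * det x := by
  by_cases hx : det x = 0
  · rw [hx, hΨ x hx, mul_zero]
  · simpa using mem_detMultipliers_of_isUnit hΨ (isUnit_iff_det_ne_zero.2 hx) 1 1

theorem injective_of_det_map [Infinite F] (hΨ : ∀ x, det x = 0 → det (Ψ x) = 0)
    (h1 : det (Ψ 1) ≠ 0) : Function.Injective Ψ := by
  refine (injective_iff_map_eq_zero Ψ).2 fun x hx => rank_eq_zero.1 ?_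
  obtain ⟨c, -, u, hu, hdet⟩ := exists_det_smul_add_eq_mul_pow_rank x
  have hconst : det (x + c) = det c := by
    refine mul_left_cancel₀ h1 ?_
    rw [← det_map hΨ, ← det_map hΨ, map_add, hx, zero_add]
  by_contra hr
  refine hu ?_
  calc u = det (x + c) := by simpa using (hdet 1).symm
    _ = det c := hconst
    _ = 0 := by simpa [hr] using hdet 0

theorem rank_map_le_of_det [Infinite F] (hΨ : ∀ x, det x = 0 → det (Ψ x) = 0)
    (h1 : det (Ψ 1) ≠ 0) (x : BlockMatrix m F) : rank (Ψ x) ≤ rank x := by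
  obtain ⟨c, -, u, hu, hdet⟩ := exists_det_smul_add_eq_mul_pow_rank (Ψ x)
  obtain ⟨y, rfl⟩ := LinearMap.surjective_of_injective (injective_of_det_map hΨ h1) c
  have hpencil : Polynomial.C (det (Ψ 1)) * pencil x y =
      Polynomial.C u * Polynomial.X ^ rank (Ψ x) := by
    refine Polynomial.funext fun t => ?_
    simp [eval_pencil, ← det_map hΨ, hdet]
  calc rank (Ψ x) = (pencil x y).natDegree := by
        rw [← Polynomial.natDegree_C_mul h1, hpencil, Polynomial.natDegree_C_mul_X_pow _ _ hu]
    _ ≤ rank x := natDegree_pencil_le_rank x y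

end LinearPreserver

section Descent

variable {ι : Type*} {m : ι → Type*} [∀ i, Fintype (m i)] [∀ i, DecidableEq (m i)]
  {k F : Type*} [Field k] [Field F] [Algebra k F]

variable (k F) in
/-- Extension of scalars, applying `algebraMap k F` to every entry. -/
def baseChange : BlockMatrix m k →ₐ[k] BlockMatrix m F :=
  AlgHom.pi fun i => (Algebra.ofId k F).mapMatrix.comp (Pi.evalAlgHom k _ i)

theorem baseChange_diagIdem (s : Finset (Σ i, m i)) : baseChange k F (diagIdem s) = diagIdem s := by
  ext i p q
  by_cases hp : (⟨i, p⟩ : Σ i, m i) ∈ s <;>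
    simp [baseChange, diagIdem, diagonal, Matrix.diagonal_apply, apply_ite, hp]

variable (m F) in
/-- The basis of elementary matrices, along which `k`-linear maps are extended to `F`-linear
ones. -/
noncomputable def stdBasis [Fintype ι] : Module.Basis (Σ i, m i × m i) F (BlockMatrix m F) :=
  Pi.basis fun i => Matrix.stdBasis F (m i) (m i)

theorem baseChange_stdBasis [Fintype ι] (j : Σ i, m i × m i) :
    baseChange k F (stdBasis m k j) = stdBasis m F j := by
  classical
  obtain ⟨i, p, q⟩ := j
  ext i' p' q'
  rcases eq_or_ne i i' with rfl | hi
  · simp [baseChange, stdBasis, Pi.basis_apply, Matrix.stdBasis_eq_single, Matrix.single_apply]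
  · simp [baseChange, stdBasis, Pi.basis_apply, Matrix.stdBasis_eq_single, hi.symm]

theorem exists_linearMap_comp_baseChange [Finite ι] (Φ : BlockMatrix m k →ₗ[k] BlockMatrix m F) :
    ∃ Ψ : BlockMatrix m F →ₗ[F] BlockMatrix m F, ∀ x, Ψ (baseChange k F x) = Φ x := by
  have := Fintype.ofFinite ι
  refine ⟨(stdBasis m F).constr F fun j => Φ (stdBasis m k j), fun x => ?_⟩
  let Ψ := (stdBasis m F).constr F fun j => Φ (stdBasis m k j)
  have h : Ψ.restrictScalars k ∘ₗ (baseChange k F).toLinearMap = Φ :=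
    (stdBasis m k).ext fun j => by
      simp only [LinearMap.comp_apply, LinearMap.restrictScalars_apply, AlgHom.toLinearMap_apply,
        baseChange_stdBasis, Ψ, Module.Basis.constr_basis]
  exact LinearMap.congr_fun h x

variable [Fintype ι] [DecidableEq ι]

theorem det_baseChange (x : BlockMatrix m k) :
    det (baseChange k F x) = algebraMap k F (det x) := by
  rw [det_apply, det_apply, RingHom.map_det]
  congr 1
  exact (Matrix.blockDiagonal'_map x (algebraMap k F) (map_zero _)).symm

variable [Infinite k]

theorem det_map_eq_zero_of_forall_algebraMap {σ : Type*} [Finite σ]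
    (L : (σ → F) →ₗ[F] BlockMatrix m F)
    (hL : ∀ c : σ → k, det (L fun j => algebraMap k F (c j)) = 0) (c : σ → F) :
    det (L c) = 0 := by
  classical
  have := Fintype.ofFinite σ
  let P : MvPolynomial σ F := Matrix.det <| Matrix.of fun x y =>
    ∑ j, MvPolynomial.X j * MvPolynomial.C (Matrix.blockDiagonal' (L (Pi.single j 1)) x y)
  have hP : ∀ c, MvPolynomial.eval c P = det (L c) := fun c => by
    have hLc : L c = ∑ j, c j • L (Pi.single j 1) := by
      conv_lhs => rw [pi_eq_sum_univ' c, map_sum]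
      simp only [map_smul]
    rw [RingHom.map_det, det_apply, hLc]
    congr 1
    ext ⟨i, p⟩ ⟨j, q⟩
    rcases eq_or_ne i j with rfl | hij
    · simp [Finset.sum_apply, Matrix.sum_apply]
    · simp [Matrix.blockDiagonal'_apply_ne, hij]
  have hP0 : P = 0 := by
    refine MvPolynomial.funext_set (fun _ => Set.range (algebraMap k F))
      (fun _ => Set.infinite_range_of_injective (algebraMap k F).injective) fun c hc => ?_
    choose d hd using fun j => hc j (Set.mem_univ j)
    obtain rfl : (fun j => algebraMap k F (d j)) = c := funext hd
    rw [hP, hL, map_zero]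
  rw [← hP, hP0, map_zero]

theorem det_map_eq_zero_of_forall_baseChange (L : BlockMatrix m F →ₗ[F] BlockMatrix m F)
    (hL : ∀ x, det (L (baseChange k F x)) = 0) (x : BlockMatrix m F) : det (L x) = 0 := by
  have h := det_map_eq_zero_of_forall_algebraMap (k := k)
    (L ∘ₗ (stdBasis m F).equivFun.symm.toLinearMap) (fun c => ?_) ((stdBasis m F).equivFun x)
  · simpa using h
  · convert hL ((stdBasis m k).equivFun.symm c)
    simp [Module.Basis.equivFun_symm_apply, baseChange_stdBasis]

theorem det_map_eq_zero_of_baseChange {Ψ : BlockMatrix m F →ₗ[F] BlockMatrix m F}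
    (hΨ : ∀ x : BlockMatrix m k, det x = 0 → det (Ψ (baseChange k F x)) = 0)
    {x : BlockMatrix m F} (hx : det x = 0) : det (Ψ x) = 0 := by
  obtain ⟨p, q, s, -, rfl⟩ := exists_eq_mul_diagIdem_mul x
  have hs : det (diagIdem s : BlockMatrix m k) = 0 := by
    refine (algebraMap k F).injective ?_
    rw [← det_baseChange, baseChange_diagIdem, map_zero]
    simpa [isUnit_iff_det_ne_zero.1 p.isUnit, isUnit_iff_det_ne_zero.1 q.isUnit] using hx
  have hleft : ∀ y : BlockMatrix m k, ∀ z,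
      det (Ψ (baseChange k F y * diagIdem s * z)) = 0 := fun y =>
    det_map_eq_zero_of_forall_baseChange (k := k)
      (Ψ ∘ₗ LinearMap.mulLeft F (baseChange k F y * diagIdem s)) fun z => by
        have hz := hΨ (y * diagIdem s * z) (by rw [map_mul, map_mul, hs, mul_zero, zero_mul])
        simpa [baseChange_diagIdem, mul_assoc] using hz
  exact det_map_eq_zero_of_forall_baseChange (k := k)
    (Ψ ∘ₗ LinearMap.mulRight F q.1 ∘ₗ LinearMap.mulRight F (diagIdem s)) (fun y => hleft y q) p

theorem rank_map_diagIdem_le {Φ : BlockMatrix m k →ₗ[k] BlockMatrix m F}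
    (hΦ : ∀ x, det x = 0 → det (Φ x) = 0) (h1 : det (Φ 1) ≠ 0) (s : Finset (Σ i, m i)) :
    rank (Φ (diagIdem s)) ≤ s.card := by
  obtain ⟨Ψ, hΨ⟩ := exists_linearMap_comp_baseChange Φ
  have : Infinite F := Infinite.of_injective _ (algebraMap k F).injective
  rw [← hΨ, ← rank_diagIdem (F := F), baseChange_diagIdem]
  refine rank_map_le_of_det (fun x hx => ?_) ?_ _
  · exact det_map_eq_zero_of_baseChange (k := k) (fun x hx => by rw [hΨ, hΦ x hx]) hx
  · rwa [← hΨ, map_one] at h1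

end Descent

section RankNonincreasing

variable {ι : Type*} [Fintype ι] [DecidableEq ι] {m : ι → Type*} [∀ i, Fintype (m i)]
  [∀ i, DecidableEq (m i)] {k K F : Type*} [Field k] [Infinite k] [Field K] [Field F]
  [Algebra k K] [Algebra k F] {Φ : BlockMatrix m K →ₗ[k] BlockMatrix m F}

variable (k) in
theorem exists_det_add_smul_ne_zero_and_rank_le {a : BlockMatrix m F} (ha : det a ≠ 0)
    (b c d : BlockMatrix m F) :
    ∃ t : k, det (a + t • b) ≠ 0 ∧ rank d ≤ rank (c + t • d) := by
  obtain ⟨t, ht⟩ := (((finite_setOf_det_add_smul_eq_zero ha b).union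
    (finite_setOf_rank_add_smul_lt c d)).preimage
    (algebraMap k F).injective.injOn).infinite_compl.nonempty
  refine ⟨t, ?_⟩
  simpa only [Set.mem_compl_iff, Set.mem_preimage, Set.mem_union, Set.mem_ofPred_eq, not_or,
    not_lt, algebraMap_smul] using ht

theorem rank_map_mul_diagIdem_mul_le (hΦ : ∀ x, det x = 0 → det (Φ x) = 0)
    {w q : BlockMatrix m K} (hwq : det (Φ (w * q)) ≠ 0) (s : Finset (Σ i, m i)) :
    rank (Φ (w * diagIdem s * q)) ≤ s.card := by
  let Φ' : BlockMatrix m k →ₗ[k] BlockMatrix m F :=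
    Φ ∘ₗ LinearMap.mulRight k q ∘ₗ LinearMap.mulLeft k w ∘ₗ (baseChange k K).toLinearMap
  have hΦ' : ∀ x, Φ' x = Φ (w * baseChange k K x * q) := fun x => rfl
  rw [← baseChange_diagIdem (k := k), ← hΦ']
  refine rank_map_diagIdem_le (fun x hx => ?_) ?_ s
  · rw [hΦ']
    exact hΦ _ (by rw [map_mul, map_mul, det_baseChange, hx, map_zero, mul_zero, zero_mul])
  · rwa [hΦ', map_one, mul_one]

end RankNonincreasing

end BlockMatrix

open BlockMatrix in
theorem stmt5_general {ι : Type*} [Fintype ι] {m : ι → Type*} [∀ i, Fintype (m i)]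
    [∀ i, DecidableEq (m i)] {k K F : Type*} [Field k] [Infinite k] [Field K] [Field F]
    [Algebra k K] [Algebra k F] (Φ : BlockMatrix m K →ₗ[k] BlockMatrix m F)
    (hΦ : ∀ x, ¬ IsUnit x → ¬ IsUnit (Φ x)) {u : BlockMatrix m K} (hu : IsUnit (Φ u))
    (a : BlockMatrix m K) : rank (Φ a) ≤ rank a := by
  classical
  simp only [isUnit_iff_det_ne_zero, not_not] at hΦ hu
  obtain ⟨p, q, s, hs, ha⟩ := exists_eq_mul_diagIdem_mul a
  obtain ⟨t, hdet, hrank⟩ := exists_det_add_smul_ne_zero_and_rank_le k hu (Φ (p.1 * q.1))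
    (Φ (u * q⁻¹.1 * diagIdem s * q.1)) (Φ a)
  rw [← map_smul, ← map_add] at hdet hrank
  have hunit : (u * q⁻¹.1 + t • p.1) * q.1 = u + t • (p.1 * q.1) := by
    rw [add_mul, q.inv_mul_cancel_right, smul_mul_assoc]
  have hsum : (u * q⁻¹.1 + t • p.1) * diagIdem s * q.1 =
      u * q⁻¹.1 * diagIdem s * q.1 + t • a := by
    rw [ha, add_mul, add_mul, smul_mul_assoc, smul_mul_assoc]
  rw [← hsum] at hrank
  rw [← hunit] at hdet
  exact hrank.trans ((rank_map_mul_diagIdem_mul_le hΦ hdet s).trans_eq hs)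

theorem stmt5 {𝔽 : Type*} [Field 𝔽] [CharZero 𝔽] {k : ℕ} (n : Fin k → ℕ) (hk : 1 ≤ k)
    (hn : ∀ i, 1 ≤ n i)
    (Φ : BlockAlg 𝔽 k n → BlockAlg 𝔽 k n)
    (hadd : ∀ x y, Φ (x + y) = Φ x + Φ y)
    (hsurj : Function.Surjective Φ)
    (hsing : ∀ a, ¬ IsUnit a → ¬ IsUnit (Φ a)) :
    ∀ a, blockRank a = 1 → blockRank (Φ a) = 1 ∨ Φ a = 0 := by
  intro a ha
  obtain ⟨u, hu⟩ := hsurj 1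
  have hle := stmt5_general (AddMonoidHom.mk' Φ hadd).toRatLinearMap hsing (hu ▸ isUnit_one) a
  rcases Nat.le_one_iff_eq_zero_or_eq_one.1 (hle.trans_eq ha) with h0 | h1
  · exact Or.inr (BlockMatrix.rank_eq_zero.1 h0)
  · exact Or.inl h1
end

section
/- Let 𝔽 be a field of characteristic zero and let 𝒜 = M_{n_1}(𝔽) ⊕ ⋯ ⊕ M_{n_k}(𝔽). If Φ : 𝒜 → 𝒜 is an additive surjection that maps singular elements to singular elements, then for every index i ∈ {1,…,k} there exists an index j ∈ {1,…,k} such that Φ maps the i-th block M_{n_i}(𝔽) onto the j-th block M_{n_j}(𝔽). -/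
/-!
Let the `e s` be the diagonal matrix units of `𝒜`, a complete family of orthogonal idempotents.
The left annihilator of `e s` is an additive group of singular elements. A group of tuples that is
invertible somewhere in every single block contains an invertible tuple, because natural multiples
of its elements can be added generically; so `Φ` maps this annihilator to elements that are all
singular in one common block `J s`.

For fixed `U`, the determinant of the `j`-th block of `Φ (U * ∑ s, t s • e s)` is homogeneous of
degree `n j` in the parameters `t s`, and vanishes when `t s = 0` for some `s` with `J s = j`;
hence it is divisible by the product of these `t s`. As `∑ j, n j` is the number of idempotents,
each fibre of `J` has exactly `n j` elements, and the determinant is a constant times that product.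
So for `J s ≠ j` the determinants of the `j`-th blocks of `Φ U` and of `Φ (U * (1 - e s))` agree,
and the latter does not change when `V * e s` is added to `U`. Since the `j`-th block of `Φ U` is
an arbitrary matrix, `Φ (V * e s)` vanishes in that block: the left ideal of `e s` is mapped into
the block `J s`.

If `s` and `t` index diagonal units of the same block and `x` is the matrix unit linking them, the
same holds for `e s + x = e s * (1 + x)`. Each of `e s`, `e t` lies in the left ideal generated by
the other one and `e s + x`, and this forces `J s = J t`.
-/

section Polynomials

open MvPolynomial

variable {σ R : Type*} [CommRing R] [IsDomain R]

lemma exists_eval_natCast_ne_zero [CharZero R] {p : MvPolynomial σ R} (hp : p ≠ 0) :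
    ∃ t : σ → ℕ, eval (fun s => (t s : R)) p ≠ 0 := by
  contrapose! hp
  refine MvPolynomial.funext_set (fun _ => Set.range (Nat.cast : ℕ → R))
    (fun _ => Set.infinite_range_of_injective Nat.cast_injective) fun x hx => ?_
  choose t ht using fun s => hx s trivial
  rw [map_zero, ← hp t, ← _root_.funext ht]

lemma X_dvd_of_eval_natCast_eq_zero [CharZero R] {p : MvPolynomial σ R} {s : σ}
    (h : ∀ t : σ → ℕ, t s = 0 → eval (fun x => (t x : R)) p = 0) : X s ∣ p := by
  classical
  rw [X_dvd_iff_modMonomial_eq_zero]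
  by_contra hr
  set r := p.modMonomial (Finsupp.single s 1) with r_def
  have eval_r (t : σ → ℕ) (ht : t s = 0) : eval (fun x => (t x : R)) r = 0 := by
    rw [← h t ht, ← divMonomial_add_modMonomial_single p s, ← r_def]
    simp [ht]
  have s_notMem : s ∉ r.vars := fun hs => by
    obtain ⟨m, hm, hms⟩ := (mem_vars_iff_mem_support s).1 hs
    refine mem_support_iff.1 hm (coeff_modMonomial_of_le p ?_)
    simpa [Nat.one_le_iff_ne_zero] using hms
  obtain ⟨t, ht⟩ := exists_eval_natCast_ne_zero hr
  refine ht (Eq.trans ?_ (eval_r (Function.update t s 0) (Function.update_self ..)))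
  refine eval₂Hom_congr' rfl (fun x hx _ => ?_) rfl
  rw [Function.update_of_ne (ne_of_mem_of_not_mem hx s_notMem)]

lemma prod_X_dvd {p : MvPolynomial σ R} {S : Finset σ} (h : ∀ s ∈ S, X s ∣ p) :
    ∏ s ∈ S, X s ∣ p := by
  induction S using Finset.cons_induction with
  | empty => exact one_dvd p
  | cons s T hs ih =>
    rw [Finset.forall_mem_cons] at h
    obtain ⟨q, rfl⟩ := ih h.2
    rw [Finset.prod_cons, mul_comm (X s)]
    refine mul_dvd_mul_left _ ((X_prime.dvd_or_dvd h.1).resolve_left fun hdvd => ?_)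
    obtain ⟨x, hx, hsx⟩ := X_prime.exists_mem_finset_dvd hdvd
    exact ne_of_mem_of_not_mem hx hs (X_dvd_X.1 hsx).symm

lemma card_add_totalDegree_eq_of_isHomogeneous_prod_X_mul {q : MvPolynomial σ R} {S : Finset σ}
    {d : ℕ} (hq : q ≠ 0) (h : ((∏ s ∈ S, X s) * q).IsHomogeneous d) :
    S.card + q.totalDegree = d := by
  have prod_ne_zero : (∏ s ∈ S, X s : MvPolynomial σ R) ≠ 0 :=
    Finset.prod_ne_zero_iff.2 fun s _ => X_ne_zero s
  have prod_hom : (∏ s ∈ S, X s : MvPolynomial σ R).IsHomogeneous S.card := by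
    simpa only [Finset.sum_const, smul_eq_mul, mul_one] using
      IsHomogeneous.prod S (X (R := R)) (fun _ => 1) fun s _ => isHomogeneous_X R s
  rw [← h.totalDegree (mul_ne_zero prod_ne_zero hq),
    totalDegree_mul_of_isDomain prod_ne_zero hq, prod_hom.totalDegree prod_ne_zero]

end Polynomials

section Pencils

open MvPolynomial

variable {m R : Type*} [Fintype m] [DecidableEq m] [CommRing R]

lemma isHomogeneous_det {τ : Type*} {M : Matrix m m (MvPolynomial τ R)} {d : ℕ}
    (hM : ∀ a b, (M a b).IsHomogeneous d) : M.det.IsHomogeneous (Fintype.card m * d) := by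
  rw [Matrix.det_apply]
  refine IsHomogeneous.sum _ _ _ fun g _ => ?_
  have hprod := IsHomogeneous.prod Finset.univ _ _ fun i _ => hM (g i) i
  simp only [Finset.sum_const, Finset.card_univ, smul_eq_mul] at hprod
  rcases Int.units_eq_one_or (Equiv.Perm.sign g) with hg | hg <;> rw [hg]
  · simpa only [one_smul] using hprod
  · simpa only [Units.neg_smul, one_smul] using hprod.neg

variable {σ : Type*} [Fintype σ]

/-- The determinant of the linear pencil `∑ s, X s • A s`, as a polynomial in the parameters
`X s`; pencils that are singular for `X s = 0` are detected by divisibility by `X s`. -/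
noncomputable def detPencil (A : σ → Matrix m m R) : MvPolynomial σ R :=
  (∑ s, (X s : MvPolynomial σ R) • (A s).map C).det

lemma eval_detPencil (A : σ → Matrix m m R) (x : σ → R) :
    eval x (detPencil A) = (∑ s, x s • A s).det := by
  rw [detPencil, RingHom.map_det, map_sum]
  congr! 2 with s
  ext a b
  simp

lemma eval_natCast_detPencil (A : σ → Matrix m m R) (t : σ → ℕ) :
    eval (fun s => (t s : R)) (detPencil A) = (∑ s, t s • A s).det := by
  simp only [eval_detPencil, Nat.cast_smul_eq_nsmul]

lemma isHomogeneous_detPencil (A : σ → Matrix m m R) :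
    (detPencil A).IsHomogeneous (Fintype.card m) := by
  rw [detPencil, ← mul_one (Fintype.card m)]
  refine isHomogeneous_det fun a b => ?_
  simp only [Matrix.sum_apply, Matrix.smul_apply, Matrix.map_apply, smul_eq_mul]
  exact IsHomogeneous.sum _ _ _ fun s _ => (isHomogeneous_X R s).mul (isHomogeneous_C σ (A s a b))

variable [IsDomain R] [CharZero R] {A : σ → Matrix m m R} {S : Finset σ}

lemma prod_X_dvd_detPencil
    (h : ∀ s ∈ S, ∀ t : σ → ℕ, t s = 0 → (∑ x, t x • A x).det = 0) :
    ∏ s ∈ S, X s ∣ detPencil A :=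
  prod_X_dvd fun s hs => X_dvd_of_eval_natCast_eq_zero fun t ht => by
    rw [eval_natCast_detPencil, h s hs t ht]

lemma card_le_of_det_sum_ne_zero
    (h : ∀ s ∈ S, ∀ t : σ → ℕ, t s = 0 → (∑ x, t x • A x).det = 0)
    (hA : (∑ x, A x).det ≠ 0) : S.card ≤ Fintype.card m := by
  obtain ⟨q, hq⟩ := prod_X_dvd_detPencil h
  have q_ne_zero : q ≠ 0 := by
    rintro rfl
    apply hA
    simpa [hq] using (eval_detPencil A 1).symm
  exact Nat.le.intro <|
    card_add_totalDegree_eq_of_isHomogeneous_prod_X_mul q_ne_zero (hq ▸ isHomogeneous_detPencil A)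

lemma det_sum_nsmul_eq_of_card_eq
    (h : ∀ s ∈ S, ∀ t : σ → ℕ, t s = 0 → (∑ x, t x • A x).det = 0)
    (hS : S.card = Fintype.card m) (t : σ → ℕ) :
    (∑ x, t x • A x).det = (∏ s ∈ S, (t s : R)) * (∑ x, A x).det := by
  obtain ⟨q, hq⟩ := prod_X_dvd_detPencil h
  obtain ⟨c, rfl⟩ : ∃ c, q = C c := by
    by_cases hq0 : q = 0
    · exact ⟨0, by rw [hq0, C_0]⟩
    have hdeg := card_add_totalDegree_eq_of_isHomogeneous_prod_X_mul hq0
      (hq ▸ isHomogeneous_detPencil A)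
    exact ⟨_, totalDegree_eq_zero_iff_eq_C.1 (by lia)⟩
  have det_sum : (∑ x, A x).det = c := by simpa [hq] using (eval_detPencil A 1).symm
  rw [← eval_natCast_detPencil, hq, det_sum]
  simp only [map_mul, map_prod, eval_X, eval_C]

end Pencils

section Determinants

variable {F : Type*} [Field F]

lemma eq_zero_of_forall_det_add_ne_zero {m : Type*} [Fintype m] [DecidableEq m] {M : Matrix m m F}
    (h : ∀ Z : Matrix m m F, Z.det ≠ 0 → (Z + M).det ≠ 0) : M = 0 := by
  classical
  obtain ⟨L, L', D, hM⟩ := Matrix.Pivot.exists_list_transvec_mul_diagonal_mul_list_transvec M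
  set P := (L.map Matrix.TransvectionStruct.toMatrix).prod
  set Q := (L'.map Matrix.TransvectionStruct.toMatrix).prod
  have det_eq (E : m → F) : (P * Matrix.diagonal E * Q).det = ∏ a, E a := by
    simp only [P, Q, Matrix.det_mul, Matrix.TransvectionStruct.det_toMatrix_prod,
      Matrix.det_diagonal, one_mul, mul_one]
  let E : m → F := fun a => if D a = 0 then 1 else -D a
  have hE : ∏ a, E a ≠ 0 := Finset.prod_ne_zero_iff.2 fun a _ => by grind
  have hED := h (P * Matrix.diagonal E * Q) (by rwa [det_eq])
  rw [hM, ← add_mul, ← mul_add, Matrix.diagonal_add, det_eq, Finset.prod_ne_zero_iff] at hED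
  have hD : D = 0 := funext fun a => by
    have hEDa : E a + D a ≠ 0 := hED a (Finset.mem_univ a)
    rw [Pi.zero_apply]
    grind
  rw [hM, hD, Matrix.diagonal_zero', mul_zero, zero_mul]

variable {κ : Type*} {m : κ → Type*} [∀ j, Fintype (m j)] [∀ j, DecidableEq (m j)]

lemma isUnit_iff_forall_det_ne_zero {X : ∀ j, Matrix (m j) (m j) F} :
    IsUnit X ↔ ∀ j, (X j).det ≠ 0 := by
  simp only [Pi.isUnit_iff, Matrix.isUnit_iff_isUnit_det, isUnit_iff_ne_zero]

lemma exists_mem_isUnit [Finite κ] [CharZero F] {G : AddSubmonoid (∀ j, Matrix (m j) (m j) F)}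
    (h : ∀ j, ∃ X ∈ G, (X j).det ≠ 0) : ∃ X ∈ G, IsUnit X := by
  classical
  cases nonempty_fintype κ
  choose X hXG hX using h
  have detPencil_ne_zero (j : κ) : detPencil (fun i => X i j) ≠ 0 := by
    intro h0
    apply hX j
    simpa [h0, Pi.single_apply] using (eval_detPencil (fun i => X i j) (Pi.single j 1)).symm
  obtain ⟨t, ht⟩ :=
    exists_eval_natCast_ne_zero (Finset.prod_ne_zero_iff.2 fun j _ => detPencil_ne_zero j)
  refine ⟨∑ i, t i • X i, sum_mem fun i _ => nsmul_mem (hXG i) _,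
    isUnit_iff_forall_det_ne_zero.2 fun j => ?_⟩
  rw [map_prod, Finset.prod_ne_zero_iff] at ht
  simpa only [eval_natCast_detPencil, Finset.sum_apply, Pi.smul_apply] using
    ht j (Finset.mem_univ j)

end Determinants

section LeftIdeals

variable {R κ : Type*} [Ring R]

lemma exists_map_mul_ne_zero {S : Type*} [Ring S] {Φ : R →+ S} (hsurj : Function.Surjective Φ)
    (hsing : ∀ a, ¬ IsUnit a → ¬ IsUnit (Φ a)) {e : R} (he : IsIdempotentElem e) (he0 : e ≠ 0) :
    ∃ V, Φ (V * e) ≠ 0 := by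
  by_contra! hΦ
  obtain ⟨U, hU⟩ := hsurj 1
  have mul_e : U * (1 - e) * e = 0 := by rw [mul_assoc, he.one_sub_mul_self, mul_zero]
  refine hsing (U * (1 - e)) (fun hu => he0 (hu.mul_right_eq_zero.1 mul_e)) ?_
  rw [mul_sub, mul_one, map_sub, hΦ, hU, sub_zero]
  exact isUnit_one

/-- The additive map `Φ` into a product sends the left ideal `R c` into the `j`-th factor.
For `c` a diagonal matrix unit, this is the block-preservation property column by column. -/
def MapsLeftIdealTo {B : κ → Type*} [∀ j, AddCommMonoid (B j)] (Φ : R →+ ∀ j, B j) (c : R)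
    (j : κ) : Prop :=
  ∀ V, ∀ l ≠ j, Φ (V * c) l = 0

lemma MapsLeftIdealTo.eq_or_eq {B : κ → Type*} [∀ j, AddCommMonoid (B j)] {Φ : R →+ ∀ j, B j}
    {a b c d f : R} {i j l : κ} (hc : MapsLeftIdealTo Φ c i) (hd : MapsLeftIdealTo Φ d j)
    (hf : MapsLeftIdealTo Φ f l) (hne : ∃ V, Φ (V * c) ≠ 0) (h : c = a * d + b * f) :
    i = j ∨ i = l := by
  by_contra! hi
  obtain ⟨V, hV⟩ := hne
  refine hV (funext fun x => ?_)
  by_cases hx : x = i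
  · rw [hx, h, mul_add, ← mul_assoc, ← mul_assoc, map_add, Pi.add_apply, hd _ _ hi.1, hf _ _ hi.2,
      add_zero, Pi.zero_apply]
  · exact hc V x hx

variable {σ : Type*} [Fintype σ] {e : σ → R}

lemma sum_nsmul_mul_eq_zero (he : OrthogonalIdempotents e) {s : σ} {t : σ → ℕ} (hts : t s = 0) :
    (∑ x, t x • e x) * e s = 0 := by
  rw [Finset.sum_mul]
  refine Finset.sum_eq_zero fun x _ => ?_
  rw [smul_mul_assoc]
  obtain rfl | hx := eq_or_ne x s
  · rw [hts, zero_smul]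
  · rw [he.ortho hx, smul_zero]

lemma sum_nsmul_map_mul {S : Type*} [AddCommMonoid S] (Φ : R →+ S) (U : R) (t : σ → ℕ) :
    ∑ x, t x • Φ (U * e x) = Φ (U * ∑ x, t x • e x) := by
  simp only [Finset.mul_sum, map_sum, mul_smul_comm, map_nsmul]

lemma sum_map_mul {S : Type*} [AddCommMonoid S] (he : CompleteOrthogonalIdempotents e)
    (Φ : R →+ S) (U : R) : ∑ x, Φ (U * e x) = Φ U := by
  rw [← map_sum, ← Finset.mul_sum, he.complete, mul_one]

end LeftIdeals

section SingularAnnihilators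

variable {R σ m D : Type*} [Ring R] [Fintype σ] [Fintype m] [DecidableEq m] [CommRing D]
  {φ : R →+ Matrix m m D} {e : σ → R} {S : Finset σ}

lemma det_sum_nsmul_map_mul_eq_zero (he : OrthogonalIdempotents e)
    (hS : ∀ s ∈ S, ∀ X, X * e s = 0 → (φ X).det = 0) (U : R) :
    ∀ s ∈ S, ∀ t : σ → ℕ, t s = 0 → (∑ x, t x • φ (U * e x)).det = 0 := fun s hs t hts => by
  rw [sum_nsmul_map_mul]
  exact hS s hs _ (by rw [mul_assoc, sum_nsmul_mul_eq_zero he hts, mul_zero])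

variable [IsDomain D] [CharZero D]

lemma card_le_of_det_map_ne_zero (he : CompleteOrthogonalIdempotents e)
    (hS : ∀ s ∈ S, ∀ X, X * e s = 0 → (φ X).det = 0) {U : R} (hU : (φ U).det ≠ 0) :
    S.card ≤ Fintype.card m :=
  card_le_of_det_sum_ne_zero (det_sum_nsmul_map_mul_eq_zero he.toOrthogonalIdempotents hS U)
    (by rwa [sum_map_mul he])

lemma det_map_mul_one_sub (he : CompleteOrthogonalIdempotents e)
    (hS : ∀ s ∈ S, ∀ X, X * e s = 0 → (φ X).det = 0) (hcard : S.card = Fintype.card m)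
    {s : σ} (hs : s ∉ S) (U : R) : (φ (U * (1 - e s))).det = (φ U).det := by
  classical
  let t : σ → ℕ := fun x => if x = s then 0 else 1
  have sum_t : ∑ x, t x • e x = 1 - e s := by
    rw [← he.complete, ← Finset.sum_erase_eq_sub (Finset.mem_univ s), ← Finset.filter_ne',
      Finset.sum_filter]
    simp only [t, ite_smul, zero_smul, one_smul, ite_not]
  have prod_t : ∏ x ∈ S, (t x : D) = 1 := Finset.prod_eq_one fun x hx => by
    simp only [t, if_neg (ne_of_mem_of_not_mem hx hs), Nat.cast_one]
  rw [← sum_t, ← sum_nsmul_map_mul, det_sum_nsmul_eq_of_card_eq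
    (det_sum_nsmul_map_mul_eq_zero he.toOrthogonalIdempotents hS U) hcard, prod_t, one_mul,
    sum_map_mul he]

lemma map_mul_eq_zero_of_notMem {F : Type*} [Field F] [CharZero F] {φ : R →+ Matrix m m F}
    (hφ : Function.Surjective φ) (he : CompleteOrthogonalIdempotents e)
    (hS : ∀ s ∈ S, ∀ X, X * e s = 0 → (φ X).det = 0) (hcard : S.card = Fintype.card m) {s : σ}
    (hs : s ∉ S) (V : R) : φ (V * e s) = 0 := by
  refine eq_zero_of_forall_det_add_ne_zero fun Z hZ => ?_
  obtain ⟨U, rfl⟩ := hφ Z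
  have add_mul_one_sub : (U + V * e s) * (1 - e s) = U * (1 - e s) := by
    rw [add_mul, mul_assoc, (he.idem s).mul_one_sub_self, mul_zero, add_zero]
  rwa [← map_add, ← det_map_mul_one_sub he hS hcard hs, add_mul_one_sub,
    det_map_mul_one_sub he hS hcard hs]

end SingularAnnihilators

section IdempotentImages

variable {R F κ : Type*} [Ring R] [Field F] [CharZero F] {m : κ → Type*} [∀ j, Fintype (m j)]
  [∀ j, DecidableEq (m j)] {Φ : R →+ ∀ j, Matrix (m j) (m j) F}

lemma exists_forall_det_eq_zero [Finite κ] (hsing : ∀ a, ¬ IsUnit a → ¬ IsUnit (Φ a))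
    {c : R} (hc : c ≠ 0) : ∃ j, ∀ X, X * c = 0 → (Φ X j).det = 0 := by
  by_contra! h
  obtain ⟨_, ⟨X, hX, rfl⟩, hu⟩ :=
    exists_mem_isUnit (G := (AddMonoidHom.mker (AddMonoidHom.mulRight c)).map Φ) fun j => by
      obtain ⟨X, hX, hdet⟩ := h j
      exact ⟨Φ X, ⟨X, hX, rfl⟩, hdet⟩
  exact hsing X (fun hX' => hc (hX'.mul_right_eq_zero.1 hX)) hu

variable [Fintype κ] {σ : Type*} [Fintype σ] {e : σ → R}

lemma card_fiber_eq [DecidableEq κ] (hsurj : Function.Surjective Φ)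
    (he : CompleteOrthogonalIdempotents e)
    (hcard : ∑ j, Fintype.card (m j) ≤ Fintype.card σ) {J : σ → κ}
    (hJ : ∀ s X, X * e s = 0 → (Φ X (J s)).det = 0) (j : κ) :
    (Finset.univ.filter (J · = j)).card = Fintype.card (m j) := by
  obtain ⟨U, hU⟩ := hsurj 1
  have card_le (j : κ) : (Finset.univ.filter (J · = j)).card ≤ Fintype.card (m j) := by
    refine card_le_of_det_map_ne_zero (φ := (Pi.evalAddMonoidHom _ j).comp Φ) (U := U) he ?_ ?_
    · rintro s hs
      obtain rfl := (Finset.mem_filter.1 hs).2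
      exact hJ s
    · simp [hU]
  have sum_card : ∑ j, (Finset.univ.filter (J · = j)).card = Fintype.card σ :=
    (Finset.card_eq_sum_card_fiberwise fun _ _ => Finset.mem_coe.2 (Finset.mem_univ _)).symm
  refine (Finset.sum_eq_sum_iff_of_le fun j _ => card_le j).1 ?_ j (Finset.mem_univ j)
  exact (Finset.sum_le_sum fun j _ => card_le j).antisymm (sum_card ▸ hcard)

lemma exists_mapsLeftIdealTo (hsurj : Function.Surjective Φ)
    (hsing : ∀ a, ¬ IsUnit a → ¬ IsUnit (Φ a)) (he : CompleteOrthogonalIdempotents e)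
    (he0 : ∀ s, e s ≠ 0) (hcard : ∑ j, Fintype.card (m j) ≤ Fintype.card σ) (s : σ) :
    ∃ j, MapsLeftIdealTo Φ (e s) j := by
  classical
  choose J hJ using fun s => exists_forall_det_eq_zero hsing (he0 s)
  refine ⟨J s, fun V l hl => map_mul_eq_zero_of_notMem (φ := (Pi.evalAddMonoidHom _ l).comp Φ)
    ((Function.surjective_eval l).comp hsurj) he ?_ (card_fiber_eq hsurj he hcard hJ l)
    (fun hs => hl (Finset.mem_filter.1 hs).2.symm) V⟩
  rintro x hx
  obtain rfl := (Finset.mem_filter.1 hx).2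
  exact hJ x

lemma exists_mapsLeftIdealTo_mul_unit (hsurj : Function.Surjective Φ)
    (hsing : ∀ a, ¬ IsUnit a → ¬ IsUnit (Φ a)) (he : CompleteOrthogonalIdempotents e)
    (he0 : ∀ s, e s ≠ 0) (hcard : ∑ j, Fintype.card (m j) ≤ Fintype.card σ) (s : σ) (u : Rˣ) :
    ∃ j, MapsLeftIdealTo Φ (e s * u) j := by
  have hsurj' : Function.Surjective (Φ.comp (AddMonoidHom.mulRight (u : R))) :=
    hsurj.comp fun a => ⟨a * ↑u⁻¹, u.inv_mul_cancel_right a⟩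
  obtain ⟨j, hj⟩ := exists_mapsLeftIdealTo hsurj'
    (fun a ha => hsing _ (mt (Units.isUnit_mul_units a u).1 ha)) he he0 hcard s
  exact ⟨j, fun V l hl => by
    simpa only [AddMonoidHom.comp_apply, AddMonoidHom.mulRight_apply, mul_assoc] using hj V l hl⟩

lemma eq_of_mapsLeftIdealTo (hsurj : Function.Surjective Φ)
    (hsing : ∀ a, ¬ IsUnit a → ¬ IsUnit (Φ a)) (he : CompleteOrthogonalIdempotents e)
    (he0 : ∀ s, e s ≠ 0) (hcard : ∑ j, Fintype.card (m j) ≤ Fintype.card σ) {s t : σ}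
    (hst : s ≠ t) {x y : R} (hsx : e s * x = x) (hxt : x * e t = x) (hyx : y * x = e t) {i j : κ}
    (hi : MapsLeftIdealTo Φ (e s) i) (hj : MapsLeftIdealTo Φ (e t) j) : i = j := by
  have x_mul_x : x * x = 0 := by
    calc
      x * x = x * e t * (e s * x) := by rw [hxt, hsx]
      _ = x * (e t * e s) * x := by simp only [mul_assoc]
      _ = 0 := by rw [he.ortho hst.symm, mul_zero, zero_mul]
  obtain ⟨u, hu⟩ : IsUnit (1 + x) := IsNilpotent.isUnit_one_add ⟨2, by rw [sq, x_mul_x]⟩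
  obtain ⟨l, hl⟩ := exists_mapsLeftIdealTo_mul_unit hsurj hsing he he0 hcard s u
  rw [hu, mul_add, mul_one, hsx] at hl
  have ne_zero (r : σ) : ∃ V, Φ (V * e r) ≠ 0 :=
    exists_map_mul_ne_zero hsurj hsing (he.idem r) (he0 r)
  have e_s_eq : e s = -x * e t + 1 * (e s + x) := by rw [neg_mul, hxt, one_mul]; abel
  have e_t_eq : e t = -y * e s + y * (e s + x) := by rw [mul_add, hyx, neg_mul]; abel
  rcases hi.eq_or_eq hj hl (ne_zero s) e_s_eq with hij | hil
  · exact hij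
  · rcases hj.eq_or_eq hi hl (ne_zero t) e_t_eq with hji | hjl
    · exact hji.symm
    · exact hil.trans hjl.symm

end IdempotentImages

section MatrixUnits

variable {ι : Type*} [DecidableEq ι] {K n : ι → Type*} [∀ i, Ring (K i)]
  [∀ i, DecidableEq (n i)]

/-- The matrix unit `E_ab` of the `i`-th block of a product of matrix rings; the `E_aa` of all
blocks are the complete orthogonal idempotents to which the left-ideal argument is applied. -/
def matrixUnit (i : ι) (a b : n i) : ∀ i, Matrix (n i) (n i) (K i) :=
  Pi.single i (Matrix.single a b 1)

lemma matrixUnit_ne_zero [∀ i, Nontrivial (K i)] (i : ι) (a b : n i) :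
    (matrixUnit i a b : ∀ i, Matrix (n i) (n i) (K i)) ≠ 0 :=
  Pi.single_ne_zero_iff.2 fun h => by
    simpa using congr_fun₂ h a b

variable [∀ i, Fintype (n i)]

lemma matrixUnit_mul_same (i : ι) (a b c : n i) :
    (matrixUnit i a b * matrixUnit i b c : ∀ i, Matrix (n i) (n i) (K i)) = matrixUnit i a c := by
  simp only [matrixUnit, ← Pi.single_mul, Matrix.single_mul_single_same, mul_one]

lemma matrixUnit_mul_of_ne {s t : Σ i, n i} (hst : s ≠ t) (a : n s.1) (b : n t.1) :
    (matrixUnit s.1 a s.2 * matrixUnit t.1 t.2 b : ∀ i, Matrix (n i) (n i) (K i)) = 0 := by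
  obtain ⟨i, s⟩ := s
  obtain ⟨j, t⟩ := t
  obtain rfl | hij := eq_or_ne i j
  · have hne : s ≠ t := fun h => hst (by rw [h])
    simp only [matrixUnit, ← Pi.single_mul, Matrix.single_mul_single_of_ne _ _ _ _ hne,
      Pi.single_zero]
  · funext l
    obtain rfl | hl := eq_or_ne l i
    · simp only [matrixUnit, Pi.mul_apply, Pi.single_eq_of_ne hij, mul_zero, Pi.zero_apply]
    · simp only [matrixUnit, Pi.mul_apply, Pi.single_eq_of_ne hl, zero_mul, Pi.zero_apply]

lemma sum_matrixUnit (i : ι) :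
    ∑ a, (matrixUnit i a a : ∀ i, Matrix (n i) (n i) (K i)) = Pi.single i 1 := by
  simp only [matrixUnit, ← Matrix.sum_single_one]
  exact (map_sum (AddMonoidHom.single (fun i => Matrix (n i) (n i) (K i)) i) _ _).symm

lemma completeOrthogonalIdempotents_matrixUnit [Fintype ι] :
    CompleteOrthogonalIdempotents
      fun s : Σ i, n i => (matrixUnit s.1 s.2 s.2 : ∀ i, Matrix (n i) (n i) (K i)) where
  idem s := matrixUnit_mul_same s.1 s.2 s.2 s.2
  ortho _ _ hst := matrixUnit_mul_of_ne hst _ _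
  complete := by
    rw [Fintype.sum_sigma]
    simp only [sum_matrixUnit]
    exact Finset.univ_sum_single 1

lemma single_eq_sum_mul_matrixUnit (i : ι) (X : Matrix (n i) (n i) (K i)) :
    (Pi.single i X : ∀ i, Matrix (n i) (n i) (K i)) =
      ∑ a, Pi.single i X * matrixUnit i a a := by
  rw [← Finset.mul_sum, sum_matrixUnit, ← Pi.single_mul, mul_one]

end MatrixUnits

section Products

variable {ι κ : Type*} [DecidableEq ι] {A : ι → Type*} {B : κ → Type*}
  [∀ i, AddCommMonoid (A i)] [∀ j, AddCommMonoid (B j)] {Φ : (∀ i, A i) →+ ∀ j, B j} {f : ι → κ}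

lemma mem_range_single_iff {i : ι} {x : ∀ i, A i} :
    x ∈ Set.range (Pi.single i) ↔ ∀ l, l ≠ i → x l = 0 := by
  constructor
  · rintro ⟨a, rfl⟩ l hl
    exact Pi.single_eq_of_ne hl a
  · intro hx
    refine ⟨x i, funext fun l => ?_⟩
    obtain rfl | hl := eq_or_ne l i
    · exact Pi.single_eq_same l (x l)
    · rw [Pi.single_eq_of_ne hl, hx l hl]

lemma map_apply_eq_sum_map_single [Fintype ι] (Φ : (∀ i, A i) →+ ∀ j, B j) (x : ∀ i, A i)
    (j : κ) : Φ x j = ∑ i, Φ (Pi.single i (x i)) j := by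
  rw [← Finset.sum_apply, ← map_sum, Finset.univ_sum_single]

lemma surjective_of_map_single [Finite ι] [∀ j, Nontrivial (B j)] (hsurj : Function.Surjective Φ)
    (hf : ∀ i a, ∀ l ≠ f i, Φ (Pi.single i a) l = 0) : Function.Surjective f := by
  classical
  cases nonempty_fintype ι
  intro j
  by_contra! hj
  obtain ⟨b, hb⟩ := exists_ne (0 : B j)
  obtain ⟨x, hx⟩ := hsurj (Pi.single j b)
  apply hb
  rw [← Pi.single_eq_same (M := B) j b, ← hx, map_apply_eq_sum_map_single]
  exact Finset.sum_eq_zero fun i _ => hf i _ j (hj i).symm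

lemma image_range_single [Finite ι] [DecidableEq κ] (hsurj : Function.Surjective Φ)
    (hf : ∀ i a, ∀ l ≠ f i, Φ (Pi.single i a) l = 0) (hinj : Function.Injective f) (i : ι) :
    Φ '' Set.range (Pi.single i) = Set.range (Pi.single (f i)) := by
  cases nonempty_fintype ι
  refine Set.Subset.antisymm ?_ ?_
  · rintro _ ⟨_, ⟨a, rfl⟩, rfl⟩
    exact mem_range_single_iff.2 (hf i a)
  · rintro _ ⟨b, rfl⟩
    obtain ⟨x, hx⟩ := hsurj (Pi.single (f i) b)
    refine ⟨Pi.single i (x i), ⟨x i, rfl⟩, funext fun l => ?_⟩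
    obtain rfl | hl := eq_or_ne l (f i)
    · rw [← hx, map_apply_eq_sum_map_single Φ x,
        Fintype.sum_eq_single i fun i' hi' => hf i' _ _ (hinj.ne hi').symm]
    · rw [hf i _ l hl, Pi.single_eq_of_ne hl]

end Products

section MatrixBlocks

variable {ι κ F : Type*} [Fintype ι] [DecidableEq ι] [Fintype κ] [Field F] [CharZero F]
  {K : ι → Type*} [∀ i, Ring (K i)] [∀ i, Nontrivial (K i)] {n : ι → Type*} {m : κ → Type*}
  [∀ i, Fintype (n i)] [∀ i, DecidableEq (n i)] [∀ i, Nonempty (n i)]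
  [∀ j, Fintype (m j)] [∀ j, DecidableEq (m j)]
  {Φ : (∀ i, Matrix (n i) (n i) (K i)) →+ ∀ j, Matrix (m j) (m j) F}

lemma exists_map_single_apply_eq_zero
    (hsize : ∑ j, Fintype.card (m j) ≤ ∑ i, Fintype.card (n i))
    (hsurj : Function.Surjective Φ) (hsing : ∀ a, ¬ IsUnit a → ¬ IsUnit (Φ a)) (i : ι) :
    ∃ j, ∀ X, ∀ l ≠ j, Φ (Pi.single i X) l = 0 := by
  let e : (Σ i, n i) → ∀ i, Matrix (n i) (n i) (K i) := fun s => matrixUnit s.1 s.2 s.2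
  have he : CompleteOrthogonalIdempotents e := completeOrthogonalIdempotents_matrixUnit
  have he0 (s : Σ i, n i) : e s ≠ 0 := matrixUnit_ne_zero _ _ _
  have hcard : ∑ j, Fintype.card (m j) ≤ Fintype.card (Σ i, n i) := by rwa [Fintype.card_sigma]
  choose J hJ using exists_mapsLeftIdealTo hsurj hsing he he0 hcard
  have J_eq (a b : n i) : J ⟨i, a⟩ = J ⟨i, b⟩ := by
    obtain rfl | hab := eq_or_ne a b
    · rfl
    · exact eq_of_mapsLeftIdealTo hsurj hsing he he0 hcard
        (fun h => hab (eq_of_heq (Sigma.mk.inj h).2)) (matrixUnit_mul_same i a a b)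
        (matrixUnit_mul_same i a b b) (matrixUnit_mul_same i b a b) (hJ _) (hJ _)
  obtain ⟨a₀⟩ : Nonempty (n i) := inferInstance
  refine ⟨J ⟨i, a₀⟩, fun X l hl => ?_⟩
  rw [single_eq_sum_mul_matrixUnit, map_sum, Finset.sum_apply]
  exact Finset.sum_eq_zero fun a _ => hJ ⟨i, a⟩ _ l (J_eq a₀ a ▸ hl)

theorem stmt6_general [DecidableEq κ] [∀ j, Nonempty (m j)]
    (hblocks : Fintype.card ι ≤ Fintype.card κ)
    (hsize : ∑ j, Fintype.card (m j) ≤ ∑ i, Fintype.card (n i))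
    (hsurj : Function.Surjective Φ) (hsing : ∀ a, ¬ IsUnit a → ¬ IsUnit (Φ a)) :
    ∃ π : ι ≃ κ, ∀ i, Φ '' Set.range (Pi.single i) = Set.range (Pi.single (π i)) := by
  choose f hf using exists_map_single_apply_eq_zero hsize hsurj hsing
  have f_surj : Function.Surjective f := surjective_of_map_single hsurj hf
  have f_bij : Function.Bijective f := f_surj.bijective_of_nat_card_le (by simpa using hblocks)
  exact ⟨Equiv.ofBijective f f_bij, image_range_single hsurj hf f_bij.injective⟩

end MatrixBlocks

lemma blockSet_eq_range_single {𝔽 : Type*} [Field 𝔽] {k : ℕ} {n : Fin k → ℕ} (i : Fin k) :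
    (blockSet i : Set (BlockAlg 𝔽 k n)) = Set.range (Pi.single i) :=
  Set.ext fun _ => mem_range_single_iff.symm

theorem stmt6 {𝔽 : Type*} [Field 𝔽] [CharZero 𝔽] {k : ℕ} (n : Fin k → ℕ) (hk : 1 ≤ k)
    (hn : ∀ i, 1 ≤ n i)
    (Φ : BlockAlg 𝔽 k n → BlockAlg 𝔽 k n)
    (hadd : ∀ x y, Φ (x + y) = Φ x + Φ y)
    (hsurj : Function.Surjective Φ)
    (hsing : ∀ a, ¬ IsUnit a → ¬ IsUnit (Φ a)) :
    ∀ i : Fin k, ∃ j : Fin k, Φ '' blockSet i = blockSet j := by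
  have (i : Fin k) : Nonempty (Fin (n i)) := Fin.pos_iff_nonempty.1 (hn i)
  obtain ⟨π, hπ⟩ := stmt6_general (Φ := AddMonoidHom.mk' Φ hadd) le_rfl le_rfl hsurj hsing
  exact fun i => ⟨π i, by rw [blockSet_eq_range_single, blockSet_eq_range_single]; exact hπ i⟩
end
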